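/- arXiv:2312.12043 — 2 statements merged into one kernel-verified Lean document; each statement's English description precedes it below -/
import Mathlib

section
/- Let f_1, …, f_m be E-functions with rational coefficients such that 1, f_1, …, f_m are linearly independent over ℂ(z). Let N be sufficiently large with respect to f_1, …, f_m, let 0 < η ≤ 1/(3(N+m−1)), let M be sufficiently large with respect to f_1, …, f_m, N, η, and set K = ⌊(ω−η)M/θ⌋. Then there exist polynomials P_κ(z) of degree less than M, for κ ∈ Ω, not all zero, such that ord_0(P_κ(z) + Σ_{j=1}^m P_{κ−e_j}(z) f_j(z)) ≥ K for every κ ∈ Θ, and such that, writing P_κ(z) = Σ_{ν=0}^{M−1} (π_{κ,ν}/ν!) z^ν, one has π_{κ,ν} ∈ ℤ and |π_{κ,ν}| ≤ C₀^{ωM/η} for all κ ∈ Ω and 0 ≤ ν ≤ M−1, where C₀ is a positive constant depending only on f_1, …, f_m. -/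
open Polynomial

noncomputable section

/-- The entire function `f(z) = ∑ aₙ zⁿ/n!` attached to a sequence of rational
Taylor coefficients. -/
def Efun (a : ℕ → ℚ) : ℂ → ℂ := fun z => ∑' n : ℕ, (a n : ℂ) * z ^ n / n.factorial

/-- A polynomial with coefficients in `ℚ̄` (the algebraic numbers inside `ℂ`). -/
def AlgCoeffs (p : Polynomial ℂ) : Prop := ∀ n, IsAlgebraic ℚ (p.coeff n)

/-- `f` is a solution of a nonzero linear differential equation with coefficients
in `ℚ̄(z)` (equivalently, after clearing denominators, in `ℚ̄[z]`). -/
def SatisfiesAlgODE (f : ℂ → ℂ) : Prop :=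
  ∃ (r : ℕ) (p : Fin (r + 1) → Polynomial ℂ),
    (∀ j, AlgCoeffs (p j)) ∧ (∃ j, p j ≠ 0) ∧
      ∀ z : ℂ, ∑ j : Fin (r + 1), (p j).eval z * iteratedDeriv (j : ℕ) f z = 0

/-- `∑ aₙ zⁿ/n!` is an E-function in the strict sense with rational coefficients. -/
def IsEFunQ (a : ℕ → ℚ) : Prop :=
  SatisfiesAlgODE (Efun a) ∧
    ∃ C : ℝ, 0 < C ∧ (∀ n, |(a n : ℝ)| ≤ C ^ (n + 1)) ∧
      ∃ d : ℕ → ℕ, (∀ n, 1 ≤ d n ∧ (d n : ℝ) ≤ C ^ (n + 1)) ∧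
        ∀ n, ∀ m ≤ n, ∃ k : ℤ, (d n : ℚ) * a m = (k : ℚ)
/-- The weight `|κ| = κ₁ + … + κ_m` of a multi-index. -/
def wt {m : ℕ} (κ : Fin m → ℕ) : ℕ := ∑ j, κ j

/-- `κ ∈ Ω`, i.e. `N - 1 ≤ |κ| ≤ N`. -/
def inOmega (m N : ℕ) (κ : Fin m → ℕ) : Prop := N - 1 ≤ wt κ ∧ wt κ ≤ N

/-- `κ ∈ Θ`, i.e. `|κ| = N`. -/
def inTheta (m N : ℕ) (κ : Fin m → ℕ) : Prop := wt κ = N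

/-- `κ - e_j` (only meaningful when `κ j ≥ 1`; guarded at use sites). -/
def sub1 {m : ℕ} (κ : Fin m → ℕ) (j : Fin m) : Fin m → ℕ :=
  Function.update κ j (κ j - 1)

/-- `κ + e_j`. -/
def add1 {m : ℕ} (κ : Fin m → ℕ) (j : Fin m) : Fin m → ℕ :=
  Function.update κ j (κ j + 1)

/-- `ω = #Ω = C(N+m-2, m-1) + C(N+m-1, m-1)`. -/
def omegaCard (m N : ℕ) : ℕ := (N + m - 2).choose (m - 1) + (N + m - 1).choose (m - 1)

/-- `θ = #Θ = C(N+m-1, m-1)`. -/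
def thetaCard (m N : ℕ) : ℕ := (N + m - 1).choose (m - 1)

/-- The functions `1, f₁, …, f_m` are linearly independent over `ℂ(z)` (equivalently,
over `ℂ[z]`). -/
def OneFLinIndep (m : ℕ) (f : Fin m → ℂ → ℂ) : Prop :=
  ∀ (Q0 : Polynomial ℂ) (Q : Fin m → Polynomial ℂ),
    (∀ z : ℂ, Q0.eval z + ∑ j : Fin m, (Q j).eval z * f j z = 0) →
      Q0 = 0 ∧ ∀ j, Q j = 0

/-- The Siegel construction (Lemma 4.1): the polynomials `P_κ` (`κ ∈ Ω`, extended by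
`0` off `Ω`) have degree `< M`, are not all zero, and for every `κ ∈ Θ` the remainder
`P_κ + ∑_j P_{κ-e_j} f_j` vanishes at `0` with order at least `K`. -/
def SiegelP (m N M K : ℕ) (f : Fin m → ℂ → ℂ) (P : (Fin m → ℕ) → Polynomial ℂ) : Prop :=
  (∀ κ, ¬ inOmega m N κ → P κ = 0) ∧
  (∀ κ, (P κ).degree < (M : WithBot ℕ)) ∧
  (∃ κ, P κ ≠ 0) ∧
  ∀ κ, inTheta m N κ → ∀ l < K, iteratedDeriv l
    (fun z => (P κ).eval z +
      ∑ j : Fin m, (if κ j = 0 then 0 else (P (sub1 κ j)).eval z * f j z)) 0 = 0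

lemma iteratedDeriv_of_series (c : ℕ → ℂ) (f : ℂ → ℂ)
    (h : ∀ z, HasSum (fun n => c n * z ^ n / n.factorial) (f z)) :
    AnalyticAt ℂ f 0 ∧ ∀ n, iteratedDeriv n f 0 = c n := by
  have h1 : HasFPowerSeriesAt f
      (FormalMultilinearSeries.ofScalars ℂ (fun n ↦ c n / n.factorial)) 0 := by
    rw [hasFPowerSeriesAt_iff]
    refine Filter.Eventually.of_forall fun z => ?_
    have := h z
    simp only [zero_add, FormalMultilinearSeries.coeff_ofScalars, smul_eq_mul]
    have e : (fun n => z ^ n * (c n / (n.factorial : ℂ))) =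
        fun n => c n * z ^ n / (n.factorial : ℂ) := by
      funext n; ring
    rw [e]
    exact this
  have h2 : AnalyticAt ℂ f 0 := ⟨_, h1⟩
  refine ⟨h2, fun n => ?_⟩
  have h3 := h2.hasFPowerSeriesAt.eq_formalMultilinearSeries h1
  have h4 := congrArg (fun p => FormalMultilinearSeries.coeff p n) h3
  simp only [FormalMultilinearSeries.coeff_ofScalars] at h4
  have : (n.factorial : ℂ) ≠ 0 := by exact_mod_cast n.factorial_ne_zero
  field_simp at h4
  exact h4

lemma Efun_deriv (a : ℕ → ℚ) (C : ℝ) (ha : ∀ n, |(a n : ℝ)| ≤ C ^ (n + 1)) :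
    AnalyticAt ℂ (Efun a) 0 ∧ ∀ n, iteratedDeriv n (Efun a) 0 = (a n : ℂ) := by
  refine iteratedDeriv_of_series (fun n => (a n : ℂ)) _ fun z => ?_
  have hs : Summable (fun n : ℕ => (a n : ℂ) * z ^ n / n.factorial) := by
    refine Summable.of_norm_bounded (g := fun n : ℕ => C * ((C * ‖z‖) ^ n / n.factorial))
      ((Real.summable_pow_div_factorial _).mul_left C) fun n => ?_
    have h1 : ‖(a n : ℂ)‖ = |(a n : ℝ)| := by
      rw [Complex.norm_ratCast]
    rw [norm_div, norm_mul, norm_pow, h1, Complex.norm_natCast, mul_pow, ← mul_div_assoc]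
    refine div_le_div_of_nonneg_right ?_ (by positivity)
    calc _ ≤ C ^ (n+1) * ‖z‖ ^ n := by gcongr; exact ha n
      _ = C * (C ^ n * ‖z‖ ^ n) := by ring
  exact hs.hasSum

lemma poly_deriv (P : Polynomial ℂ) (l : ℕ) :
    iteratedDeriv l (fun z => P.eval z) 0 = (l.factorial : ℂ) * P.coeff l := by
  refine (iteratedDeriv_of_series (fun n => (n.factorial : ℂ) * P.coeff n) _ fun z => ?_).2 l
  have : ∀ n, (n.factorial : ℂ) * P.coeff n * z ^ n / n.factorial = P.coeff n * z ^ n := by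
    intro n
    have : (n.factorial : ℂ) ≠ 0 := by exact_mod_cast n.factorial_ne_zero
    field_simp
  simp only [this]
  rw [Polynomial.eval_eq_sum_range]
  refine hasSum_sum_of_ne_finset_zero fun b hb => ?_
  rw [Polynomial.coeff_eq_zero_of_natDegree_lt (by simpa using hb)]; simp

/-- The finite set of indices of weight `n`. -/
def wtSet (m n : ℕ) : Finset (Fin m → ℕ) := Finset.piAntidiag Finset.univ n

lemma mem_wtSet {m n : ℕ} {κ : Fin m → ℕ} : κ ∈ wtSet m n ↔ wt κ = n := by
  simp [wtSet, wt]

lemma card_wtSet (m n : ℕ) (hm : 1 ≤ m) : (wtSet m n).card = (n + m - 1).choose (m - 1) := by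
  have h := Finset.card_finsuppAntidiag_nat_eq_choose (s := (Finset.univ : Finset (Fin m))) n
  have h2 : (wtSet m n).card = (Finset.finsuppAntidiag (Finset.univ : Finset (Fin m)) n).card := by
    refine Finset.card_bij' (fun κ _ => Finsupp.equivFunOnFinite.symm κ) (fun f _ => f) ?_ ?_ ?_ ?_
    · intro κ hκ
      rw [mem_wtSet] at hκ
      simpa [wt] using hκ
    · intro f hf
      rw [mem_wtSet]
      simpa [wt] using hf
    · intro κ _; rfl
    · intro f _; ext; rfl
  rw [h2, h, Finset.card_univ, Fintype.card_fin, add_comm m n]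
  rw [← Nat.choose_symm (by omega)]
  congr 1; omega

/-- `Ω` as a finite set. -/
def omSet (m N : ℕ) : Finset (Fin m → ℕ) := wtSet m (N - 1) ∪ wtSet m N

lemma mem_omSet {m N : ℕ} (hN : 1 ≤ N) {κ : Fin m → ℕ} : κ ∈ omSet m N ↔ inOmega m N κ := by
  simp only [omSet, Finset.mem_union, mem_wtSet, inOmega]; omega

lemma card_omSet (m N : ℕ) (hm : 1 ≤ m) (hN : 1 ≤ N) : (omSet m N).card = omegaCard m N := by
  rw [omSet, Finset.card_union_of_disjoint, card_wtSet _ _ hm, card_wtSet _ _ hm, omegaCard]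
  · congr 2; omega
  · rw [Finset.disjoint_left]; intro κ; simp only [mem_wtSet]; omega

lemma sub1_mem {m N : ℕ} (hN : 1 ≤ N) {κ : Fin m → ℕ} (hκ : wt κ = N) {j : Fin m}
    (hj : κ j ≠ 0) : sub1 κ j ∈ omSet m N := by
  have h : wt (sub1 κ j) + 1 = wt κ := by
    unfold wt sub1
    rw [Finset.sum_update_of_mem (Finset.mem_univ j),
      ← Finset.add_sum_erase _ κ (Finset.mem_univ j), Finset.sdiff_singleton_eq_erase]
    omega
  simp only [omSet, Finset.mem_union, mem_wtSet]; omega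

lemma omega_bounds (m N : ℕ) (hm : 1 ≤ m) (hN : 1 ≤ N) :
    thetaCard m N + 1 ≤ omegaCard m N ∧ omegaCard m N ≤ 2 * thetaCard m N ∧ 1 ≤ thetaCard m N := by
  unfold thetaCard omegaCard
  have h1 : (N + m - 2).choose (m - 1) ≤ (N + m - 1).choose (m - 1) :=
    Nat.choose_le_choose _ (by omega)
  have h2 : 0 < (N + m - 2).choose (m - 1) := Nat.choose_pos (by omega)
  omega

lemma rem_deriv {m : ℕ} (f : Fin m → ℂ → ℂ) (a : Fin m → ℕ → ℚ)
    (hf : ∀ j, AnalyticAt ℂ (f j) 0) (hf' : ∀ j n, iteratedDeriv n (f j) 0 = (a j n : ℂ))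
    (P : (Fin m → ℕ) → Polynomial ℂ) (κ : Fin m → ℕ) (l : ℕ) :
    iteratedDeriv l (fun z => (P κ).eval z +
      ∑ j : Fin m, (if κ j = 0 then 0 else (P (sub1 κ j)).eval z * f j z)) 0 =
    (l.factorial : ℂ) * (P κ).coeff l + ∑ j : Fin m, if κ j = 0 then 0 else
      ∑ ν ∈ Finset.range (l + 1), (l.choose ν : ℂ) *
        ((ν.factorial : ℂ) * (P (sub1 κ j)).coeff ν) * (a j (l - ν) : ℂ) := by
  have hP : ∀ Q : Polynomial ℂ, ContDiffAt ℂ l (fun z => Q.eval z) 0 := fun Q =>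
    by simpa using (Q.contDiff_aeval (𝕜 := ℂ) l).contDiffAt
  have hm : ∀ j, ContDiffAt ℂ l
      (fun z => if κ j = 0 then 0 else (P (sub1 κ j)).eval z * f j z) 0 := by
    intro j
    by_cases h : κ j = 0
    · simp only [h, if_true]; exact contDiffAt_const
    · simp only [h, if_false]; exact (hP _).mul (hf j).contDiffAt
  rw [iteratedDeriv_fun_add (hP _) (ContDiffAt.sum fun j _ => hm j),
    iteratedDeriv_fun_sum (fun j _ => hm j), poly_deriv]
  congr 1
  refine Finset.sum_congr rfl fun j _ => ?_
  by_cases h : κ j = 0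
  · simp [h]
  · simp only [h, if_false]
    rw [iteratedDeriv_fun_mul (hP _) (hf j).contDiffAt]
    simp only [poly_deriv, hf']

/-- The (rational) matrix of the linear system. -/
def Qent {m : ℕ} (a : Fin m → ℕ → ℚ) (κ : Fin m → ℕ) (l : ℕ) (κ' : Fin m → ℕ) (ν : ℕ) : ℚ :=
  (if κ' = κ ∧ ν = l then 1 else 0) +
    ∑ j, if κ j ≠ 0 ∧ sub1 κ j = κ' ∧ ν ≤ l then (l.choose ν : ℚ) * a j (l - ν) else 0

lemma Qent_sum {m N M : ℕ} (hN : 1 ≤ N) (a : Fin m → ℕ → ℚ) (κ : Fin m → ℕ) (hκ : wt κ = N)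
    (l : ℕ) (p : (Fin m → ℕ) → ℕ → ℤ) (hp : ∀ κ ν, M ≤ ν → p κ ν = 0) :
    ∑ κ' ∈ omSet m N, ∑ ν ∈ Finset.range M, Qent a κ l κ' ν * (p κ' ν : ℚ) =
      (p κ l : ℚ) + ∑ j : Fin m, if κ j = 0 then 0 else
        ∑ ν ∈ Finset.range (l + 1), (l.choose ν : ℚ) * (p (sub1 κ j) ν : ℚ) * a j (l - ν) := by
  simp only [Qent, add_mul, Finset.sum_add_distrib]
  congr 1
  · rw [Finset.sum_eq_single κ]
    · by_cases h : l < M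
      · rw [Finset.sum_eq_single l]
        · simp
        · intro b _ hb; simp [hb]
        · intro h'; simp [h] at h'
      · rw [hp κ l (by omega)]
        refine (Finset.sum_eq_zero fun ν hν => ?_).trans (by simp)
        have : ν ≠ l := by simp at hν; omega
        simp [this]
    · intro b _ hb; simp [hb]
    · intro h'; simp [omSet, mem_wtSet, hκ] at h'
  · simp only [Finset.sum_mul]
    rw [Finset.sum_congr rfl fun κ' _ => Finset.sum_comm, Finset.sum_comm]
    refine Finset.sum_congr rfl fun j _ => ?_
    by_cases h : κ j = 0
    · simp [h]
    · rw [Finset.sum_eq_single (sub1 κ j)]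
      · simp only [ne_eq, h, not_false_eq_true, true_and, if_false, ite_mul, zero_mul]
        rw [← Finset.sum_filter]
        refine (Finset.sum_subset ?_ ?_).trans (Finset.sum_congr rfl fun ν _ => ?_)
        · intro ν hν; simp at hν ⊢; omega
        · intro ν hν hν'
          rw [hp _ ν (by simp at hν hν'; by_contra hh; have := hν' (by omega); omega)]; simp
        · ring
      · intro b _ hb; simp [hb.symm]
      · intro h'; exact absurd (sub1_mem hN hκ h) h'

lemma Qent_int {m : ℕ} (a : Fin m → ℕ → ℚ) (d : Fin m → ℕ → ℕ)
    (hd : ∀ j n, ∀ k ≤ n, ∃ z : ℤ, (d j n : ℚ) * a j k = (z : ℚ))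
    (κ : Fin m → ℕ) (l : ℕ) (κ' : Fin m → ℕ) (ν : ℕ) :
    ∃ z : ℤ, ((∏ j, d j l : ℕ) : ℚ) * Qent a κ l κ' ν = (z : ℚ) := by
  suffices h : ((∏ j, d j l : ℕ) : ℚ) * Qent a κ l κ' ν ∈ (Int.castRingHom ℚ).range by
    obtain ⟨z, hz⟩ := h
    exact ⟨z, by simpa using hz.symm⟩
  have hnat : ∀ n : ℕ, (n : ℚ) ∈ (Int.castRingHom ℚ).range := fun n => ⟨n, by simp⟩
  rw [Qent, mul_add, Finset.mul_sum]
  refine Subring.add_mem _ ?_ (Subring.sum_mem _ fun j _ => ?_)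
  · refine Subring.mul_mem _ (hnat _) ?_
    split_ifs
    · exact Subring.one_mem _
    · exact Subring.zero_mem _
  · split_ifs
    · rw [← Finset.mul_prod_erase Finset.univ (fun j => d j l) (Finset.mem_univ j)]
      obtain ⟨z, hz⟩ := hd j l (l - ν) (by omega)
      have : (((d j l * ∏ x ∈ Finset.univ.erase j, d x l : ℕ)) : ℚ) *
          ((l.choose ν : ℚ) * a j (l - ν)) =
          ((∏ x ∈ Finset.univ.erase j, d x l : ℕ) : ℚ) * (l.choose ν : ℚ) * (z : ℚ) := by
        rw [← hz, Nat.cast_mul]; ring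
      rw [this]
      exact Subring.mul_mem _ (Subring.mul_mem _ (hnat _) (hnat _)) ⟨z, by simp⟩
    · rw [mul_zero]; exact Subring.zero_mem _

lemma Qent_bound {m : ℕ} (a : Fin m → ℕ → ℚ) (d : Fin m → ℕ → ℕ) (C : ℝ) (hC : 1 ≤ C)
    (ha : ∀ j n, |(a j n : ℝ)| ≤ C ^ (n + 1)) (hd : ∀ j n, (d j n : ℝ) ≤ C ^ (n + 1))
    (κ : Fin m → ℕ) (l : ℕ) (κ' : Fin m → ℕ) (ν : ℕ) :
    |((((∏ j, d j l : ℕ) : ℚ) * Qent a κ l κ' ν : ℚ) : ℝ)| ≤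
      (m + 1) * (2 * C ^ (m + 1)) ^ (l + 1) := by
  have hD : ((∏ j, d j l : ℕ) : ℝ) ≤ (C ^ (l + 1)) ^ m := by
    push_cast
    calc ∏ j, (d j l : ℝ) ≤ ∏ j : Fin m, C ^ (l + 1) :=
          Finset.prod_le_prod (fun _ _ => by positivity) fun j _ => hd j l
      _ = _ := by simp
  have hX : (1 : ℝ) ≤ (2 * C) ^ (l + 1) := one_le_pow₀ (by linarith)
  have hQ : |((Qent a κ l κ' ν : ℚ) : ℝ)| ≤ (m + 1) * (2 * C) ^ (l + 1) := by
    unfold Qent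
    push_cast
    refine (abs_add_le _ _).trans ?_
    have h1 : |((if κ' = κ ∧ ν = l then 1 else 0 : ℝ))| ≤ (2 * C) ^ (l + 1) := by
      split_ifs <;> simp <;> linarith
    have h2 : |∑ j, (if κ j ≠ 0 ∧ sub1 κ j = κ' ∧ ν ≤ l then (l.choose ν : ℝ) * (a j (l - ν) : ℝ)
        else 0)| ≤ m * (2 * C) ^ (l + 1) := by
      refine (Finset.abs_sum_le_sum_abs _ _).trans ?_
      calc _ ≤ ∑ j : Fin m, (2 * C) ^ (l + 1) := Finset.sum_le_sum fun j _ => ?_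
        _ = _ := by simp
      split_ifs
      · rw [abs_mul, mul_pow, Nat.abs_cast]
        have e1 : (l.choose ν : ℝ) ≤ 2 ^ (l + 1) := by
          have : l.choose ν ≤ 2 ^ l := Nat.choose_le_two_pow l ν
          calc (l.choose ν : ℝ) ≤ 2 ^ l := by exact_mod_cast this
            _ ≤ _ := pow_le_pow_right₀ (by norm_num) (by omega)
        have e2 : |(a j (l - ν) : ℝ)| ≤ C ^ (l + 1) :=
          (ha j _).trans (pow_le_pow_right₀ hC (by omega))
        gcongr
      · simp; positivity
    simp only [apply_ite (Rat.cast : ℚ → ℝ), Rat.cast_mul, Rat.cast_natCast, Rat.cast_one,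
      Rat.cast_zero]
    linarith
  rw [Rat.cast_mul, abs_mul, Rat.cast_natCast, Nat.abs_cast]
  calc _ ≤ (C ^ (l + 1)) ^ m * ((m + 1) * (2 * C) ^ (l + 1)) := by gcongr
    _ = _ := by rw [pow_succ C m]; ring

section
attribute [local instance] Matrix.seminormedAddCommGroup

lemma siegel_app {α β : Type} [Fintype α] [Fintype β] (A : α → β → ℤ) (X : ℝ) (hX : 1 ≤ X)
    (hA : ∀ i j, |(A i j : ℝ)| ≤ X) (hn : Fintype.card α < Fintype.card β)
    (hm : 0 < Fintype.card α) :
    ∃ t : β → ℤ, t ≠ 0 ∧ (∀ i, ∑ j, A i j * t j = 0) ∧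
      ∀ j, |(t j : ℝ)| ≤ ((Fintype.card β : ℝ) * X) ^
        ((Fintype.card α : ℝ) / ((Fintype.card β : ℝ) - (Fintype.card α : ℝ))) := by
  obtain ⟨t, ht0, ht, htb⟩ := Int.Matrix.exists_ne_zero_int_vec_norm_le (Matrix.of A) hn hm
  refine ⟨t, ht0, fun i => congrFun ht i, fun j => ?_⟩
  have h1 : ‖Matrix.of A‖ ≤ X := by
    rw [Matrix.norm_le_iff (by linarith)]
    intro i j
    rw [Int.norm_eq_abs]
    exact hA i j
  have h2 : |(t j : ℝ)| ≤ ‖t‖ := by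
    rw [← Int.norm_eq_abs]; exact norm_le_pi_norm t j
  refine h2.trans (htb.trans ?_)
  refine Real.rpow_le_rpow (by positivity) ?_ ?_
  · gcongr
    exact max_le hX h1
  · have : (Fintype.card α : ℝ) < Fintype.card β := by exact_mod_cast hn
    exact div_nonneg (by positivity) (by linarith)
end

lemma eventually_two_pow (c : ℝ) (hc : 0 ≤ c) : ∃ M₁ : ℕ, ∀ M : ℕ, M₁ ≤ M → c * M ≤ 2 ^ M := by
  have h := tendsto_pow_const_div_const_pow_of_one_lt 1 (r := (2 : ℝ)) (by norm_num)
  have h2 := h.eventually (gt_mem_nhds (show (0 : ℝ) < 1 / (c + 1) by positivity))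
  obtain ⟨M₁, hM₁⟩ := Filter.eventually_atTop.1 h2
  refine ⟨M₁, fun M hM => ?_⟩
  have := hM₁ M hM
  rw [div_lt_div_iff₀ (by positivity) (by positivity)] at this
  have h3 : (0 : ℝ) ≤ M := by positivity
  simp at this
  nlinarith

/-- **Lemma 4.1 (Siegel's construction of graded Padé approximants).** Let
`f₁, …, f_m` be E-functions with rational coefficients such that `1, f₁, …, f_m` are
linearly independent over `ℂ(z)`. There is a constant `C₀ > 0`, depending only on the
`fⱼ`, such that for all sufficiently large `N`, all `0 < η ≤ 1/(3(N+m-1))` and all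
sufficiently large `M` (in terms of the `fⱼ`, `N`, `η`), with `K = ⌊(ω-η)M/θ⌋`, there
exist polynomials `P_κ` of degree `< M` (`κ ∈ Ω`), not all zero, with
`ord₀(P_κ + ∑ⱼ P_{κ-eⱼ} fⱼ) ≥ K` for all `κ ∈ Θ`, whose coefficients are
`π_{κ,ν}/ν!` with `π_{κ,ν} ∈ ℤ` and `|π_{κ,ν}| ≤ C₀^{ωM/η}`. -/
theorem siegel_construction
    (m : ℕ) (hm : 1 ≤ m) (a : Fin m → ℕ → ℚ) (ha : ∀ j, IsEFunQ (a j))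
    (hindep : OneFLinIndep m (fun j => Efun (a j))) :
    ∃ C₀ : ℝ, 0 < C₀ ∧ ∃ N₀ : ℕ, ∀ N : ℕ, N₀ ≤ N →
      ∀ η : ℝ, 0 < η → η ≤ 1 / (3 * ((N : ℝ) + (m : ℝ) - 1)) →
      ∃ M₀ : ℕ, ∀ M : ℕ, M₀ ≤ M →
      ∃ (P : (Fin m → ℕ) → Polynomial ℂ) (pi : (Fin m → ℕ) → ℕ → ℤ),
        SiegelP m N M
          (Nat.floor (((omegaCard m N : ℝ) - η) * (M : ℝ) / (thetaCard m N : ℝ)))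
          (fun j => Efun (a j)) P ∧
        ∀ κ, inOmega m N κ → ∀ ν < M,
          (P κ).coeff ν = (pi κ ν : ℂ) / (ν.factorial : ℂ) ∧
          (|pi κ ν| : ℝ) ≤ C₀ ^ ((omegaCard m N : ℝ) * (M : ℝ) / η) := by
  have ha' := fun j => (ha j).2
  choose Cj hCpos hCa d hd hdi using ha'
  obtain ⟨C, hC1, hCj⟩ : ∃ C : ℝ, 1 ≤ C ∧ ∀ j, Cj j ≤ C := by
    refine ⟨1 + ∑ j, Cj j, ?_, fun j => ?_⟩
    · have := Finset.sum_nonneg (s := Finset.univ) fun j _ => (hCpos j).le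
      linarith
    · have := Finset.single_le_sum (s := Finset.univ) (fun j _ => (hCpos j).le) (Finset.mem_univ j)
      linarith
  have hfa : ∀ j, AnalyticAt ℂ (Efun (a j)) 0 := fun j => (Efun_deriv (a j) (Cj j) (hCa j)).1
  have hfd : ∀ j n, iteratedDeriv n (Efun (a j)) 0 = (a j n : ℂ) :=
    fun j => (Efun_deriv (a j) (Cj j) (hCa j)).2
  have haC : ∀ j n, |(a j n : ℝ)| ≤ C ^ (n + 1) := fun j n =>
    (hCa j n).trans (pow_le_pow_left₀ (hCpos j).le (hCj j) _)
  have hdC : ∀ j n, (d j n : ℝ) ≤ C ^ (n + 1) := fun j n =>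
    (hd j n).2.trans (pow_le_pow_left₀ (hCpos j).le (hCj j) _)
  set B : ℝ := 2 * C ^ (m + 1) with hB
  have hB1 : 1 ≤ B := by
    have : 1 ≤ C ^ (m + 1) := one_le_pow₀ hC1
    linarith
  refine ⟨2 * B ^ 2, by positivity, 1, fun N hN η hη hη' => ?_⟩
  obtain ⟨hω1, hω2, hθ⟩ := omega_bounds m N hm hN
  obtain ⟨M₁, hM₁⟩ := eventually_two_pow ((omegaCard m N : ℝ) * (m + 1)) (by positivity)
  refine ⟨max 1 M₁, fun M hM => ?_⟩
  have hM1 : 1 ≤ M := le_trans (le_max_left _ _) hM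
  have hM2 := hM₁ M (le_trans (le_max_right _ _) hM)
  have hη1 : η ≤ 1 := by
    refine hη'.trans ?_
    have h1 : (1 : ℝ) ≤ N := by exact_mod_cast hN
    have h2 : (1 : ℝ) ≤ m := by exact_mod_cast hm
    rw [div_le_one (by linarith)]
    linarith
  set K := Nat.floor (((omegaCard m N : ℝ) - η) * (M : ℝ) / (thetaCard m N : ℝ)) with hK
  have hω1r : (thetaCard m N : ℝ) + 1 ≤ omegaCard m N := by exact_mod_cast hω1
  have hω2r : (omegaCard m N : ℝ) ≤ 2 * thetaCard m N := by exact_mod_cast hω2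
  have hθr : (1 : ℝ) ≤ thetaCard m N := by exact_mod_cast hθ
  have hMr : (1 : ℝ) ≤ M := by exact_mod_cast hM1
  have hK1 : 1 ≤ K := by
    refine Nat.le_floor ?_
    rw [Nat.cast_one, le_div_iff₀ (by linarith)]
    nlinarith
  have hK2 : (thetaCard m N : ℝ) * K ≤ ((omegaCard m N : ℝ) - η) * M := by
    have h := Nat.floor_le (a := ((omegaCard m N : ℝ) - η) * (M : ℝ) / (thetaCard m N : ℝ))
      (div_nonneg (mul_nonneg (by linarith) (by linarith)) (by linarith))
    rw [← hK, le_div_iff₀ (by linarith)] at h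
    linarith
  have hηM : 0 < η * M := by positivity
  have hK3 : K ≤ 2 * M := by
    have : (K : ℝ) ≤ 2 * M := by
      by_contra hcon
      push Not at hcon
      nlinarith
    exact_mod_cast this
  have hK4 : thetaCard m N * K < omegaCard m N * M := by
    have : (thetaCard m N : ℝ) * K < omegaCard m N * M := by nlinarith
    exact_mod_cast this
  -- the matrix
  choose A hA using fun (i : (wtSet m N) × Fin K) (k : (omSet m N) × Fin M) =>
    Qent_int a d hdi i.1.1 i.2.1 k.1.1 k.2.1
  have cα : Fintype.card ((wtSet m N) × Fin K) = thetaCard m N * K := by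
    simp [card_wtSet _ _ hm, thetaCard]
  have cβ : Fintype.card ((omSet m N) × Fin M) = omegaCard m N * M := by
    simp [card_omSet _ _ hm hN]
  have hAb : ∀ i k, |(A i k : ℝ)| ≤ (m + 1) * (B ^ 2) ^ M := by
    intro i k
    have h := Qent_bound a d C hC1 haC hdC i.1.1 i.2.1 k.1.1 k.2.1
    rw [hA i k, Rat.cast_intCast] at h
    refine h.trans ?_
    rw [← hB, ← pow_mul]
    have : B ^ (i.2.1 + 1) ≤ B ^ (2 * M) := pow_le_pow_right₀ hB1 (by have := i.2.2; omega)
    gcongr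
  have hX1 : (1 : ℝ) ≤ (m + 1) * (B ^ 2) ^ M := by
    have h1 : (1 : ℝ) ≤ (B ^ 2) ^ M := one_le_pow₀ (one_le_pow₀ hB1)
    have h2 : (0 : ℝ) ≤ m := by positivity
    nlinarith
  obtain ⟨t, ht0, ht, htb⟩ := siegel_app A _ hX1 hAb (by rw [cα, cβ]; exact hK4)
    (by rw [cα]; positivity)
  rw [cα, cβ] at htb
  have hbound : ∀ k, |(t k : ℝ)| ≤ (2 * B ^ 2) ^ ((omegaCard m N : ℝ) * (M : ℝ) / η) := by
    intro k
    refine (htb k).trans ?_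
    push_cast
    have hω0 : (0 : ℝ) < omegaCard m N := by linarith
    have hbase : (omegaCard m N : ℝ) * M * ((m + 1) * (B ^ 2) ^ M) ≤ (2 * B ^ 2) ^ M := by
      rw [mul_pow 2 (B ^ 2) M]
      calc _ = ((omegaCard m N : ℝ) * (m + 1) * M) * (B ^ 2) ^ M := by ring
        _ ≤ _ := mul_le_mul_of_nonneg_right hM2 (by positivity)
    have hexp : (thetaCard m N : ℝ) * K / (omegaCard m N * M - thetaCard m N * K) ≤
        omegaCard m N / η := by
      rw [div_le_div_iff₀ (by nlinarith) hη]
      nlinarith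
    have hexp0 : 0 ≤ (thetaCard m N : ℝ) * K / (omegaCard m N * M - thetaCard m N * K) :=
      div_nonneg (by positivity) (by nlinarith)
    have hone : (1 : ℝ) ≤ (2 * B ^ 2) ^ M := one_le_pow₀ (by nlinarith)
    calc _ ≤ ((2 * B ^ 2) ^ M) ^ ((thetaCard m N : ℝ) * K /
            (omegaCard m N * M - thetaCard m N * K)) :=
          Real.rpow_le_rpow (by positivity) hbase hexp0
      _ ≤ ((2 * B ^ 2) ^ M) ^ ((omegaCard m N : ℝ) / η) :=
          Real.rpow_le_rpow_of_exponent_le hone hexp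
      _ = _ := by
          rw [← Real.rpow_natCast (2 * B ^ 2) M, ← Real.rpow_mul (by positivity)]
          congr 1; ring
  -- the coefficients
  set p : (Fin m → ℕ) → ℕ → ℤ := fun κ ν =>
    if h : κ ∈ omSet m N ∧ ν < M then t (⟨κ, h.1⟩, ⟨ν, h.2⟩) else 0 with hp
  have hp0 : ∀ κ ν, M ≤ ν → p κ ν = 0 := fun κ ν h => by
    simp only [hp]; rw [dif_neg]; omega
  have hp1 : ∀ κ ν, κ ∉ omSet m N → p κ ν = 0 := fun κ ν h => by
    simp only [hp]; rw [dif_neg]; tauto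
  have hpt : ∀ k : (omSet m N) × Fin M, p k.1.1 k.2.1 = t k := fun k => by
    simp only [hp]; rw [dif_pos ⟨k.1.2, k.2.2⟩]
  set P : (Fin m → ℕ) → Polynomial ℂ := fun κ =>
    ∑ ν ∈ Finset.range M, Polynomial.monomial ν ((p κ ν : ℂ) / (ν.factorial : ℂ)) with hP
  have hfac : ∀ n : ℕ, (n.factorial : ℂ) ≠ 0 := fun n => by exact_mod_cast n.factorial_ne_zero
  have hcoeff : ∀ κ ν, (P κ).coeff ν = (p κ ν : ℂ) / (ν.factorial : ℂ) := by
    intro κ ν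
    simp only [hP, Polynomial.finsetSum_coeff, Polynomial.coeff_monomial]
    rw [Finset.sum_ite_eq' (Finset.range M) ν]
    split_ifs with h
    · rfl
    · rw [hp0 κ ν (by simpa using h)]; simp
  refine ⟨P, p, ⟨?_, ?_, ?_, ?_⟩, ?_⟩
  · intro κ hκ
    ext ν
    rw [hcoeff, hp1 κ ν (fun h => hκ ((mem_omSet hN).1 h))]; simp
  · intro κ
    rw [Polynomial.degree_lt_iff_coeff_zero]
    intro ν hν
    rw [hcoeff, hp0 κ ν (by exact_mod_cast hν)]; simp
  · obtain ⟨k, hk⟩ := Function.ne_iff.1 ht0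
    refine ⟨k.1.1, fun h => hk ?_⟩
    have h2 := hcoeff k.1.1 k.2.1
    rw [h, hpt, Polynomial.coeff_zero, eq_comm, div_eq_zero_iff] at h2
    simpa [hfac] using h2
  · intro κ hκ l hl
    rw [rem_deriv (fun j => Efun (a j)) a hfa hfd P κ l]
    have hfc : ∀ κ ν, (ν.factorial : ℂ) * (P κ).coeff ν = (p κ ν : ℂ) := fun κ ν => by
      rw [hcoeff, mul_div_cancel₀ _ (hfac ν)]
    simp only [hfc]
    have hQ := Qent_sum (M := M) hN a κ hκ l p hp0
    have hz : ∑ κ' ∈ omSet m N, ∑ ν ∈ Finset.range M, Qent a κ l κ' ν * (p κ' ν : ℚ) = 0 := by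
      have h1 := ht (⟨κ, mem_wtSet.2 hκ⟩, ⟨l, hl⟩)
      have hD : ((∏ j, d j l : ℕ) : ℚ) ≠ 0 := by
        have : ∏ j, d j l ≠ 0 := Finset.prod_ne_zero_iff.2 fun j _ => by
          have := (hd j l).1; omega
        exact_mod_cast this
      have h2 : ∑ k : (omSet m N) × Fin M, Qent a κ l k.1.1 k.2.1 * (p k.1.1 k.2.1 : ℚ) = 0 := by
        refine (mul_eq_zero.1 ?_).resolve_left hD
        rw [Finset.mul_sum]
        have h3 : ((∑ k, A (⟨κ, mem_wtSet.2 hκ⟩, ⟨l, hl⟩) k * t k : ℤ) : ℚ) = 0 := by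
          rw [h1]; simp
        rw [← h3, Int.cast_sum]
        refine Finset.sum_congr rfl fun k _ => ?_
        rw [Int.cast_mul, ← hA, hpt]; ring
      rw [Fintype.sum_prod_type] at h2
      rw [← Finset.sum_coe_sort, ← h2]
      refine Finset.sum_congr rfl fun κ' _ => ?_
      rw [Finset.sum_range]
    rw [hz] at hQ
    have hQ' := congrArg (Rat.cast : ℚ → ℂ) hQ.symm
    push_cast [apply_ite (Rat.cast : ℚ → ℂ)] at hQ'
    exact hQ'
  · intro κ hκ ν hν
    refine ⟨hcoeff κ ν, ?_⟩
    have := hbound (⟨κ, (mem_omSet hN).2 hκ⟩, ⟨ν, hν⟩)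
    rw [← hpt] at this
    exact_mod_cast this
end
end

section
/- Let R be a vector subspace of ℂ^Ω defined over ℚ̄. Then dim R ≥ (2 − (m−1)/(N+m−1)) · dim(F ∩ R), and equality holds if and only if R = {0} or R = ℂ^Ω. -/
open Polynomial

noncomputable section

/-- The canonical basis vector `E_κ`. -/
def Evec {m : ℕ} (κ : Fin m → ℕ) : (Fin m → ℕ) → ℂ := fun μ => if μ = κ then 1 else 0

/-- The vector `Z_κ = E_κ + ∑_j ξ_j E_{κ-e_j}` (with `E_{κ-e_j} = 0` when `κ_j = 0`). -/
def Zvec {m : ℕ} (ξ : Fin m → ℂ) (κ : Fin m → ℕ) : (Fin m → ℕ) → ℂ :=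
  Evec κ + ∑ j : Fin m, (if κ j = 0 then 0 else ξ j • Evec (sub1 κ j))

/-- `ℂ^Ω`, realized as the space of families supported on
`Ω = {κ : N-1 ≤ |κ| ≤ N}` (the span of the `E_κ`, `κ ∈ Ω`). -/
def OmegaSpace (m N : ℕ) : Submodule ℂ ((Fin m → ℕ) → ℂ) :=
  Submodule.span ℂ {v | ∃ κ, inOmega m N κ ∧ v = Evec κ}

/-- `F = Span{Z_κ : κ ∈ Θ} ⊆ ℂ^Ω`, where `Θ = {κ : |κ| = N}`. -/
def Fspace (m N : ℕ) (ξ : Fin m → ℂ) : Submodule ℂ ((Fin m → ℕ) → ℂ) :=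
  Submodule.span ℂ {v | ∃ κ, wt κ = N ∧ v = Zvec ξ κ}

/-- A subspace of `ℂ^Ω` is defined over `ℚ̄` if it is spanned by vectors all of whose
coordinates are algebraic numbers (equivalently, it has a `ℂ`-basis of such vectors). -/
def DefinedOverQbar {m : ℕ} (R : Submodule ℂ ((Fin m → ℕ) → ℂ)) : Prop :=
  ∃ s : Set ((Fin m → ℕ) → ℂ), (∀ v ∈ s, ∀ κ, IsAlgebraic ℚ (v κ)) ∧
    Submodule.span ℂ s = R

/-- `1, ξ₁, …, ξ_m` are linearly independent over `ℚ̄`. -/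
def LinIndepOverQbar (m : ℕ) (ξ : Fin m → ℂ) : Prop :=
  ∀ (a : ℂ) (c : Fin m → ℂ), IsAlgebraic ℚ a → (∀ j, IsAlgebraic ℚ (c j)) →
    a + ∑ j : Fin m, c j * ξ j = 0 → a = 0 ∧ ∀ j, c j = 0


section PartAB
open scoped TensorProduct

theorem exists_point {K A : Type} [Field K] [IsAlgClosed K] [CommRing A] [IsDomain A] [Algebra K A]
    [Algebra.FiniteType K A] (f : A) (hf : f ≠ 0) : ∃ χ : A →ₐ[K] K, χ f ≠ 0 := by
  let B := Localization.Away f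
  have hdom : IsDomain B := IsLocalization.isDomain_localization
      (powers_le_nonZeroDivisors_of_noZeroDivisors hf)
  have hft2 : Algebra.FiniteType K B := inferInstance
  obtain ⟨M, hM⟩ := Ideal.exists_maximal B
  let : Field (B ⧸ M) := Ideal.Quotient.field M
  have : Algebra.FiniteType K (B ⧸ M) := inferInstance
  have hfin := finite_of_finite_type_of_isJacobsonRing K (B ⧸ M)
  have hb := IsAlgClosed.algebraMap_bijective_of_isIntegral (k := K) (K := B ⧸ M)
  let e : K ≃ₐ[K] (B ⧸ M) := AlgEquiv.ofBijective (Algebra.ofId K (B ⧸ M)) hb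
  let g : A →ₐ[K] B ⧸ M := (Ideal.Quotient.mkₐ K M).comp (IsScalarTower.toAlgHom K A B)
  refine ⟨e.symm.toAlgHom.comp g, ?_⟩
  have hu : IsUnit (g f) := by
    have : IsUnit (algebraMap A B f) := IsLocalization.Away.algebraMap_isUnit f
    exact this.map (Ideal.Quotient.mkₐ K M)
  exact (hu.map e.symm.toAlgHom).ne_zero

theorem tensor_nzd {K A B : Type} [Field K] [IsAlgClosed K] [Field A] [Field B] [Algebra K A]
    [Algebra K B] : IsDomain (A ⊗[K] B) := by
  have : NoZeroDivisors (A ⊗[K] B) := by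
    constructor
    intro x y hxy
    by_contra! hne
    obtain ⟨hx, hy⟩ := hne
    classical
    let b := Module.Basis.ofVectorSpace K B
    let bb := Algebra.TensorProduct.basis A b
    obtain ⟨i, hi⟩ : ∃ i, bb.repr x i ≠ 0 := by
      by_contra! h
      exact hx (bb.repr.map_eq_zero_iff.1 (Finsupp.ext h))
    obtain ⟨j, hj⟩ : ∃ i, bb.repr y i ≠ 0 := by
      by_contra! h
      exact hy (bb.repr.map_eq_zero_iff.1 (Finsupp.ext h))
    let s : Finset A := (bb.repr x).support.image (bb.repr x) ∪ (bb.repr y).support.image (bb.repr y)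
    let A0 : Subalgebra K A := Algebra.adjoin K (s : Set A)
    have hs : ∀ a ∈ s, a ∈ A0 := fun a ha => Algebra.subset_adjoin ha
    have hft : Algebra.FiniteType K A0 := A0.fg_iff_finiteType.1 ⟨s, rfl⟩
    have hx0 : ∀ k, bb.repr x k ∈ A0 := by
      intro k
      by_cases h : bb.repr x k = 0
      · rw [h]; exact A0.zero_mem
      · exact hs _ (Finset.mem_union_left _ (Finset.mem_image_of_mem _ (by simpa using h)))
    have hy0 : ∀ k, bb.repr y k ∈ A0 := by
      intro k
      by_cases h : bb.repr y k = 0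
      · rw [h]; exact A0.zero_mem
      · exact hs _ (Finset.mem_union_right _ (Finset.mem_image_of_mem _ (by simpa using h)))
    let ι : A0 ⊗[K] B →ₐ[K] A ⊗[K] B := Algebra.TensorProduct.map A0.val (AlgHom.id K B)
    have hι : Function.Injective ι :=
      Module.Flat.rTensor_preserves_injective_linearMap (M := B) A0.val.toLinearMap
        Subtype.val_injective
    have key : ∀ z : A ⊗[K] B, (h0 : ∀ k, bb.repr z k ∈ A0) →
        ι (∑ k ∈ (bb.repr z).support, (⟨_, h0 k⟩ : A0) ⊗ₜ[K] b k) = z := by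
      intro z h0
      conv_rhs => rw [← bb.linearCombination_repr z]
      rw [Finsupp.linearCombination_apply, Finsupp.sum, map_sum]
      refine Finset.sum_congr rfl fun k _ => ?_
      simp [ι, bb, TensorProduct.smul_tmul']
    set x0 := ∑ k ∈ (bb.repr x).support, (⟨_, hx0 k⟩ : A0) ⊗ₜ[K] b k with hx0d
    set y0 := ∑ k ∈ (bb.repr y).support, (⟨_, hy0 k⟩ : A0) ⊗ₜ[K] b k with hy0d
    have hxy0 : x0 * y0 = 0 := by
      apply hι
      rw [map_mul, key, key, hxy, map_zero]
    obtain ⟨χ, hχ⟩ := exists_point (K := K) ((⟨_, hx0 i⟩ : A0) * ⟨_, hy0 j⟩)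
      (mul_ne_zero (fun h => hi (congrArg Subtype.val h)) (fun h => hj (congrArg Subtype.val h)))
    let ψ : A0 ⊗[K] B →ₐ[K] B := Algebra.TensorProduct.lift ((Algebra.ofId K B).comp χ) (AlgHom.id K B)
      (fun _ _ => Commute.all _ _)
    have h0 : ψ x0 * ψ y0 = 0 := by rw [← map_mul, hxy0, map_zero]
    have key2 : ∀ z : A ⊗[K] B, (h0 : ∀ k, bb.repr z k ∈ A0) →
        ψ (∑ k ∈ (bb.repr z).support, (⟨_, h0 k⟩ : A0) ⊗ₜ[K] b k) = 0 →
        ∀ k, χ ⟨_, h0 k⟩ = 0 := by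
      intro z h0 h k
      have h1 : ∑ k ∈ (bb.repr z).support, χ ⟨_, h0 k⟩ • b k = 0 := by
        rw [← h, map_sum]
        refine Finset.sum_congr rfl fun k _ => ?_
        simp [ψ, Algebra.smul_def, Algebra.ofId_apply]
      by_cases hk : k ∈ (bb.repr z).support
      · exact linearIndependent_iff'.1 b.linearIndependent _ _ h1 k hk
      · have : (⟨_, h0 k⟩ : A0) = 0 := Subtype.ext (by simpa using hk)
        rw [this, map_zero]
    rw [map_mul] at hχ
    rcases mul_eq_zero.1 h0 with h | h
    · exact hχ (by rw [key2 x hx0 h i, zero_mul])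
    · exact hχ (by rw [key2 y hy0 h j, mul_zero])
  exact NoZeroDivisors.to_isDomain _

/-- linear independence of a finite family over a field mapped in by `i` -/
def LI {K L : Type} [Field K] [Field L] (i : K →+* L) {ι : Type} [Fintype ι] (b : ι → L) : Prop :=
  ∀ c : ι → K, ∑ k, i (c k) * b k = 0 → ∀ k, c k = 0

theorem exists_double {K L : Type} [Field K] [Field L] [IsAlgClosed K] (i : K →+* L) :
    ∃ (M : Type) (_ : Field M) (_ : IsAlgClosed M) (j₁ j₂ : L →+* M), j₁.comp i = j₂.comp i ∧
      (∀ (ι : Type) [Fintype ι] (b : ι → L), LI i b → LI j₁ (fun k => j₂ (b k))) ∧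
      (∀ (ι : Type) [Fintype ι] (b : ι → L), LI i b → LI j₂ (fun k => j₁ (b k))) := by
  let : Algebra K L := i.toAlgebra
  have hd : IsDomain (L ⊗[K] L) := tensor_nzd
  let Q := FractionRing (L ⊗[K] L)
  let M := AlgebraicClosure Q
  let q : L ⊗[K] L →+* M := (algebraMap Q M).comp (algebraMap (L ⊗[K] L) Q)
  have hq : Function.Injective q :=
    (algebraMap Q M).injective.comp (IsFractionRing.injective (L ⊗[K] L) Q)
  let l₁ : L →+* L ⊗[K] L := Algebra.TensorProduct.includeLeftRingHom
  let l₂ : L →+* L ⊗[K] L := (Algebra.TensorProduct.includeRight : L →ₐ[K] L ⊗[K] L).toRingHom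
  have hli : ∀ (ι : Type) [Fintype ι] (b : ι → L), LI i b → LinearIndependent K b := by
    intro ι _ b hb
    rw [Fintype.linearIndependent_iff]
    intro g hg
    exact hb g hg
  refine ⟨M, inferInstance, inferInstance, q.comp l₁, q.comp l₂, ?_, ?_, ?_⟩
  · ext k
    have : l₁ (i k) = l₂ (i k) := by
      change (algebraMap K L k) ⊗ₜ[K] (1:L) = (1:L) ⊗ₜ[K] (algebraMap K L k)
      rw [Algebra.algebraMap_eq_smul_one, TensorProduct.smul_tmul]
    simp [this]
  · intro ι _ b hb c hc
    have h1 := Module.Flat.linearIndependent_one_tmul (S := L) (hli ι b hb)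
    rw [Fintype.linearIndependent_iff] at h1
    apply h1 c
    apply hq
    rw [map_zero, ← hc, map_sum]
    refine Finset.sum_congr rfl fun k _ => ?_
    simp only [RingHom.comp_apply, ← map_mul]
    congr 1
    simp [l₁, l₂, TensorProduct.smul_tmul']
  · intro ι _ b hb c hc
    have h1 := Module.Flat.linearIndependent_one_tmul (S := L) (hli ι b hb)
    rw [Fintype.linearIndependent_iff] at h1
    apply h1 c
    apply (TensorProduct.comm K L L).injective
    apply hq
    rw [map_zero, map_zero, ← hc, map_sum, map_sum]
    refine Finset.sum_congr rfl fun k _ => ?_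
    simp only [RingHom.comp_apply, ← map_mul]
    congr 1
    simp [l₁, l₂, TensorProduct.smul_tmul']

theorem base_change_li {K L : Type} [Field K] [Field L] (i : K →+* L) {ι σ : Type} [Fintype ι]
    (f : ι → σ → K) (hf : LinearIndependent K f) : LinearIndependent L (fun k s => i (f k s)) := by
  let _ : Algebra K L := i.toAlgebra
  rw [Fintype.linearIndependent_iff] at hf ⊢
  intro c hc k
  rw [← Module.forall_dual_apply_eq_zero_iff K]
  intro τ
  refine hf (fun k => τ (c k)) ?_ k
  ext s
  have h := congrArg τ (congrFun hc s)
  simp only [Finset.sum_apply, Pi.smul_apply, smul_eq_mul, map_sum, Pi.zero_apply, map_zero] at h ⊢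
  rw [← h]
  refine Finset.sum_congr rfl fun k _ => ?_
  have : c k * i (f k s) = (f k s) • c k := by rw [Algebra.smul_def, mul_comm]; rfl
  rw [this, map_smul, smul_eq_mul, mul_comm]

theorem base_change_li_poly {K L : Type} [Field K] [Field L] (i : K →+* L) {ι σ : Type} [Fintype ι]
    (f : ι → MvPolynomial σ K) (hf : LinearIndependent K f) :
    LinearIndependent L (fun k => MvPolynomial.map i (f k)) := by
  have h1 : LinearIndependent K (fun k s => (f k).coeff s) := by
    rw [Fintype.linearIndependent_iff] at hf ⊢
    intro c hc
    refine hf c ?_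
    ext s
    simpa [MvPolynomial.coeff_sum] using congrFun hc s
  have h2 := base_change_li i _ h1
  rw [Fintype.linearIndependent_iff] at h2 ⊢
  intro c hc
  refine h2 c ?_
  ext s
  simpa [MvPolynomial.coeff_sum, MvPolynomial.coeff_map] using congrArg (MvPolynomial.coeff s) hc

/-- the extension of scalars of a space of polynomials -/
noncomputable def extS {K L : Type} [Field K] [Field L] (i : K →+* L) {σ : Type}
    (S : Submodule K (MvPolynomial σ K)) : Submodule L (MvPolynomial σ L) :=
  Submodule.span L (MvPolynomial.map i '' (S : Set (MvPolynomial σ K)))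

theorem ext_basis {K L : Type} [Field K] [Field L] (i : K →+* L) {σ : Type}
    (S : Submodule K (MvPolynomial σ K)) [FiniteDimensional K S] :
    ∃ f : Fin (Module.finrank K S) → MvPolynomial σ L, LinearIndependent L f ∧
      Submodule.span L (Set.range f) = extS i S := by
  let b := Module.finBasis K S
  refine ⟨fun k => MvPolynomial.map i (b k : MvPolynomial σ K), ?_, ?_⟩
  · apply base_change_li_poly i (fun k => (b k : MvPolynomial σ K))
    exact b.linearIndependent.map' S.subtype (by simp)
  · apply le_antisymm
    · refine Submodule.span_mono ?_
      rintro _ ⟨k, rfl⟩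
      exact ⟨_, (b k).2, rfl⟩
    · refine Submodule.span_le.2 ?_
      rintro _ ⟨p, hp, rfl⟩
      have h := congrArg (Subtype.val) (b.sum_repr ⟨p, hp⟩)
      simp only [Submodule.coe_sum, Submodule.coe_smul] at h
      rw [← h, map_sum]
      refine Submodule.sum_mem _ fun k _ => ?_
      rw [MvPolynomial.smul_eq_C_mul, map_mul, MvPolynomial.map_C, ← MvPolynomial.smul_eq_C_mul]
      exact Submodule.smul_mem _ _ (Submodule.subset_span ⟨k, rfl⟩)

theorem ext_finrank {K L : Type} [Field K] [Field L] (i : K →+* L) {σ : Type}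
    (S : Submodule K (MvPolynomial σ K)) [FiniteDimensional K S] :
    Module.finrank L (extS i S) = Module.finrank K S := by
  obtain ⟨f, hf, h⟩ := ext_basis i S
  rw [← h, finrank_span_eq_card hf, Fintype.card_fin]

theorem ext_fd {K L : Type} [Field K] [Field L] (i : K →+* L) {σ : Type}
    (S : Submodule K (MvPolynomial σ K)) [FiniteDimensional K S] :
    FiniteDimensional L (extS i S) := by
  obtain ⟨f, hf, h⟩ := ext_basis i S
  rw [← h]
  exact FiniteDimensional.span_of_finite L (Set.finite_range f)

theorem ext_deg {K L : Type} [Field K] [Field L] (i : K →+* L) {σ : Type}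
    (S : Submodule K (MvPolynomial σ K)) (N : ℕ) (h : ∀ f ∈ S, f.totalDegree ≤ N) :
    ∀ f ∈ extS i S, f.totalDegree ≤ N := by
  have : extS i S ≤ MvPolynomial.restrictTotalDegree σ L N := by
    refine Submodule.span_le.2 ?_
    rintro _ ⟨p, hp, rfl⟩
    rw [SetLike.mem_coe, MvPolynomial.mem_restrictTotalDegree]
    refine le_trans ?_ (h p hp)
    exact Finset.sup_mono (MvPolynomial.support_map_subset _ _)
  intro f hf
  exact (MvPolynomial.mem_restrictTotalDegree _ _ _).1 (this hf)

theorem rank_nullity {K V W : Type} [Field K] [AddCommGroup V] [Module K V] [AddCommGroup W]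
    [Module K W] (f : V →ₗ[K] W) (S : Submodule K V) [FiniteDimensional K S] :
    Module.finrank K (S.map f) + Module.finrank K ↥(S ⊓ LinearMap.ker f) = Module.finrank K S := by
  rw [← LinearMap.finrank_range_add_finrank_ker (f.domRestrict S), LinearMap.range_domRestrict]
  congr 1
  rw [LinearMap.ker_domRestrict, ← Submodule.finrank_map_subtype_eq, Submodule.map_comap_subtype]

section
open MvPolynomial

/-- the affine form -/
noncomputable def lin {L : Type} [Field L] {n : ℕ} (ξ : Fin (n + 1) → L) : MvPolynomial (Fin n) L :=
  MvPolynomial.C (ξ 0) + ∑ j : Fin n, MvPolynomial.C (ξ j.succ) * MvPolynomial.X j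

/-- substitution `X 0 ↦ lin a` -/
noncomputable def elim {L : Type} [Field L] {n : ℕ} (a : Fin (n + 1) → L) :
    MvPolynomial (Fin (n + 1)) L →ₐ[L] MvPolynomial (Fin n) L :=
  MvPolynomial.aeval (Fin.cons (lin a) MvPolynomial.X)

theorem lin_deg {L : Type} [Field L] {n : ℕ} (ξ : Fin (n + 1) → L) : (lin ξ).totalDegree ≤ 1 := by
  refine (totalDegree_add _ _).trans (max_le (by simp) ?_)
  refine totalDegree_finsetSum_le fun j _ => ?_
  refine (totalDegree_mul _ _).trans ?_
  simp

theorem lin_coeff {L : Type} [Field L] {n : ℕ} (ξ : Fin (n + 1) → L) (j : Fin n) :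
    (lin ξ).coeff (Finsupp.single j 1) = ξ j.succ := by
  classical
  simp [lin, MvPolynomial.coeff_C, MvPolynomial.coeff_sum, MvPolynomial.coeff_C_mul, MvPolynomial.coeff_X, Finsupp.single_left_inj]
  intro h
  exact absurd (congrArg (fun s => s j) h) (by simp)

theorem lin_coeff0 {L : Type} [Field L] {n : ℕ} (ξ : Fin (n + 1) → L) :
    (lin ξ).coeff 0 = ξ 0 := by
  classical
  simp [lin, MvPolynomial.coeff_C, MvPolynomial.coeff_sum, MvPolynomial.coeff_C_mul, MvPolynomial.coeff_X]

theorem lin_deg_one {L : Type} [Field L] {n : ℕ} (ξ : Fin (n + 1) → L) (j : Fin n)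
    (h : ξ j.succ ≠ 0) : (lin ξ).totalDegree = 1 := by
  refine le_antisymm (lin_deg ξ) ?_
  have := le_totalDegree (p := lin ξ) (s := Finsupp.single j 1) (by
    rw [MvPolynomial.mem_support_iff, lin_coeff]; exact h)
  simpa using this

theorem lin_map {L M : Type} [Field L] [Field M] (j : L →+* M) {n : ℕ} (ξ : Fin (n + 1) → L) :
    MvPolynomial.map j (lin ξ) = lin (fun t => j (ξ t)) := by
  simp [lin]

theorem elim_map {L M : Type} [Field L] [Field M] (j : L →+* M) {n : ℕ} (a : Fin (n + 1) → L)
    (p : MvPolynomial (Fin (n + 1)) L) :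
    MvPolynomial.map j (elim a p) = elim (fun t => j (a t)) (MvPolynomial.map j p) := by
  induction p using MvPolynomial.induction_on with
  | C c => simp [elim]
  | add p q hp hq => simp [hp, hq]
  | mul_X p t hp =>
    rw [map_mul, map_mul, map_mul, map_mul, hp]
    congr 1
    refine Fin.cases ?_ (fun t => ?_) t
    · simp [elim, lin_map]
    · simp [elim]

theorem elim_deg {L : Type} [Field L] {n : ℕ} (a : Fin (n + 1) → L)
    (p : MvPolynomial (Fin (n + 1)) L) : (elim a p).totalDegree ≤ p.totalDegree := by
  have : elim a p = ∑ s ∈ p.support, MvPolynomial.C (p.coeff s) * ∏ t, (Fin.cons (lin a) MvPolynomial.X : Fin (n+1) → MvPolynomial (Fin n) L) t ^ s t := by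
    rw [elim, MvPolynomial.aeval_def, eval₂_eq']; rfl
  rw [this]
  refine totalDegree_finsetSum_le fun s hs => ?_
  refine (totalDegree_mul _ _).trans ?_
  rw [MvPolynomial.totalDegree_C, zero_add]
  refine (totalDegree_finsetProd _ _).trans ?_
  refine le_trans ?_ (le_totalDegree hs)
  rw [Finsupp.sum_fintype _ _ (by simp)]
  refine Finset.sum_le_sum fun t _ => ?_
  refine (totalDegree_pow _ _).trans ?_
  have : (((Fin.cons (lin a) MvPolynomial.X : Fin (n+1) → MvPolynomial (Fin n) L) t)).totalDegree ≤ 1 := by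
    refine Fin.cases ?_ (fun t => ?_) t
    · simpa using lin_deg a
    · simp
  nlinarith

theorem elim_ker {L : Type} [Field L] {n : ℕ} (a : Fin (n + 1) → L)
    (p : MvPolynomial (Fin (n + 1)) L) (h : elim a p = 0) :
    (MvPolynomial.X 0 - rename Fin.succ (lin a)) ∣ p := by
  rw [← Ideal.mem_span_singleton]
  let I : Ideal (MvPolynomial (Fin (n + 1)) L) := Ideal.span {MvPolynomial.X 0 - rename Fin.succ (lin a)}
  have key : (Ideal.Quotient.mkₐ L I).comp ((rename Fin.succ).comp (elim a)) = Ideal.Quotient.mkₐ L I := by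
    apply MvPolynomial.algHom_ext
    intro t
    refine Fin.cases ?_ (fun t => ?_) t
    · simp only [elim, AlgHom.comp_apply, MvPolynomial.aeval_X, Fin.cons_zero, Ideal.Quotient.mkₐ_eq_mk]
      refine ((Ideal.Quotient.mk_eq_mk_iff_sub_mem _ _).2 ?_).symm
      exact Ideal.subset_span rfl
    · simp [elim]
  have h2 := DFunLike.congr_fun key p
  simp only [AlgHom.comp_apply, h, map_zero] at h2
  exact Ideal.Quotient.eq_zero_iff_mem.1 h2.symm

/-- coefficients of the solved equation -/
noncomputable def solve {L : Type} [Field L] {n : ℕ} (ξ : Fin (n + 2) → L) : Fin (n + 1) → L :=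
  Fin.cons (-(ξ 1)⁻¹ * ξ 0) (fun t => -(ξ 1)⁻¹ * ξ t.succ.succ)

theorem lin_solve {L : Type} [Field L] {n : ℕ} (ξ : Fin (n + 2) → L) (h : ξ 1 ≠ 0) :
    lin ξ = MvPolynomial.C (ξ 1) * (MvPolynomial.X 0 - rename Fin.succ (lin (solve ξ))) := by
  have h1 : MvPolynomial.C (σ := Fin (n+1)) (ξ 1) * MvPolynomial.C ((ξ 1)⁻¹) = 1 := by
    rw [← MvPolynomial.C_mul, mul_inv_cancel₀ h, MvPolynomial.C_1]
  simp only [lin, solve, Fin.cons_zero, Fin.cons_succ, map_add, map_sum, map_mul, rename_C, rename_X,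
    Fin.sum_univ_succ, map_neg, mul_assoc, ← Finset.mul_sum, Fin.succ_zero_eq_one]
  linear_combination (-MvPolynomial.C (ξ 0) - ∑ i : Fin n, MvPolynomial.C (ξ i.succ.succ) * MvPolynomial.X i.succ) * h1

theorem elim_lin {L : Type} [Field L] {n : ℕ} (a : Fin (n + 1) → L) (η : Fin (n + 2) → L) :
    elim a (lin η) = lin (fun t => η 1 * a t + Fin.cons (α := fun _ => L) (η 0) (fun t => η t.succ.succ) t) := by
  simp only [lin, elim, map_add, map_sum, map_mul, MvPolynomial.aeval_X, MvPolynomial.algHom_C, MvPolynomial.algebraMap_eq,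
    Fin.sum_univ_succ, Fin.cons_zero, Fin.cons_succ, mul_add, add_mul, Finset.mul_sum,
    Finset.sum_add_distrib, Fin.succ_zero_eq_one, mul_assoc]
  ring
end

end PartAB

section PartC
open Module

theorem mulL_inj {L : Type} [Field L] {σ : Type} (p : MvPolynomial σ L) (hp : p ≠ 0) :
    Function.Injective (LinearMap.mulLeft L p) := by
  intro x y h
  exact mul_left_cancel₀ hp h

theorem lin_ne_zero {L : Type} [Field L] {n : ℕ} (ξ : Fin (n + 1) → L) (h : ξ 0 ≠ 0) :
    lin ξ ≠ 0 := by
  intro h0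
  apply h
  rw [← lin_coeff0 ξ, h0, MvPolynomial.coeff_zero]

theorem LI_ne {K L : Type} [Field K] [Field L] (i : K →+* L) {ι : Type} [Fintype ι] (b : ι → L)
    (h : LI i b) (k : ι) : b k ≠ 0 := by
  classical
  intro h0
  have := h (Pi.single k 1) (Finset.sum_eq_zero fun t _ => by
    by_cases ht : t = k
    · subst ht; simp [h0]
    · simp [ht]) k
  simp at this

/-- the key statement -/
def HOM (n N : ℕ) : Prop :=
  ∀ (K L : Type) [Field K] [Field L] [IsAlgClosed K] [IsAlgClosed L] (i : K →+* L)
    (ξ : Fin (n + 1) → L), LI i ξ → ∀ (S : Submodule K (MvPolynomial (Fin n) K))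
    (D : Submodule L (MvPolynomial (Fin n) L)) [FiniteDimensional K S],
    (∀ f ∈ S, f.totalDegree ≤ N) → (∀ q ∈ D, lin ξ * q ∈ extS i S) →
    (N + n) * finrank L D ≤ N * finrank K S ∧
    (1 ≤ N → (N + n) * finrank L D = N * finrank K S →
      finrank K S = 0 ∨ finrank K S = (N + n).choose n)

theorem fd_D {K L : Type} [Field K] [Field L] (i : K →+* L) {σ : Type} (l : MvPolynomial σ L)
    (hl : l ≠ 0)
    (S : Submodule K (MvPolynomial σ K)) (D : Submodule L (MvPolynomial σ L))
    [FiniteDimensional K S] (h : ∀ q ∈ D, l * q ∈ extS i S) :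
    FiniteDimensional L D ∧ D.map (LinearMap.mulLeft L l) ≤ extS i S ∧
      finrank L (D.map (LinearMap.mulLeft L l)) = finrank L D := by
  have := ext_fd i S
  have hle : D.map (LinearMap.mulLeft L l) ≤ extS i S := by
    rintro _ ⟨q, hq, rfl⟩
    exact h q hq
  have hfd : FiniteDimensional L (D.map (LinearMap.mulLeft L l)) :=
    Submodule.finiteDimensional_of_le hle
  let e := Submodule.equivMapOfInjective (LinearMap.mulLeft L l) (mulL_inj l hl) D
  exact ⟨FiniteDimensional.of_injective e.toLinearMap e.injective, hle, e.finrank_eq.symm⟩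

theorem hom_zero (N : ℕ) : HOM 0 N := by
  intro K L _ _ _ _ i ξ hξ S D _ hS hD
  have hl := lin_ne_zero ξ (LI_ne i ξ hξ 0)
  obtain ⟨hfd, hle, heq⟩ := fd_D i (lin ξ) hl S D hD
  have := ext_fd i S
  have h1 := Submodule.finrank_mono hle
  rw [heq, ext_finrank] at h1
  refine ⟨by simpa using Nat.mul_le_mul_left N h1, fun hN _ => ?_⟩
  have e : MvPolynomial (Fin 0) K ≃ₗ[K] K := (MvPolynomial.isEmptyAlgEquiv K (Fin 0)).toLinearEquiv
  have hfin : FiniteDimensional K (MvPolynomial (Fin 0) K) :=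
    FiniteDimensional.of_injective e.toLinearMap e.injective
  have h2 := Submodule.finrank_le S
  rw [e.finrank_eq, finrank_self] at h2
  rw [Nat.choose_zero_right]
  omega

theorem hom_degree_zero (n : ℕ) : HOM (n + 1) 0 := by
  intro K L _ _ _ _ i ξ hξ S D _ hS hD
  have hl := lin_ne_zero ξ (LI_ne i ξ hξ 0)
  have hD0 : D = ⊥ := by
    rw [eq_bot_iff]
    intro q hq
    by_contra hq0
    have h1 := ext_deg i S 0 hS _ (hD q hq)
    rw [MvPolynomial.totalDegree_mul_of_isDomain hl hq0, lin_deg_one ξ 0 (LI_ne i ξ hξ _)] at h1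
    omega
  subst hD0
  simp

theorem LI_reduced {L M : Type} [Field L] [Field M] (j₁ : L →+* M) {n : ℕ} (a : Fin (n + 1) → L)
    (η : Fin (n + 2) → M) (h : LI j₁ η) :
    LI j₁ (fun t => η 1 * j₁ (a t) + Fin.cons (α := fun _ => M) (η 0) (fun t => η t.succ.succ) t) := by
  intro c hc
  have := h (Fin.cons (c 0) (Fin.cons (∑ t, c t * a t) (fun t => c t.succ))) (by
    rw [← hc]
    have : ∀ x y, j₁ x * j₁ y * η 1 = j₁ x * (η 1 * j₁ y) := fun x y => by ring
    have e1 : (Fin.succ 0 : Fin (n + 2)) = 1 := rfl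
    simp only [Fin.sum_univ_succ, Fin.cons_zero, Fin.cons_succ, map_add, map_sum, map_mul, add_mul,
      Finset.sum_mul, mul_add, Finset.sum_add_distrib, this, e1]
    ring)
  intro t
  refine Fin.cases ?_ (fun t => ?_) t
  · exact this 0
  · exact this t.succ.succ

theorem hom_arith (k N s d sb db e : ℕ) (h1 : sb + d ≤ s) (h2 : db + e = d)
    (h3 : (N + 1 + k) * db ≤ (N + 1) * sb) (h4 : (N + (k + 1)) * e ≤ N * d) :
    (N + 1 + (k + 1)) * d ≤ (N + 1) * s ∧
    ((N + 1 + (k + 1)) * d = (N + 1) * s → sb + d = s ∧ (N + 1 + k) * db = (N + 1) * sb) := by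
  subst h2
  have h5 : (N + 1) * (sb + (db + e)) ≤ (N + 1) * s := Nat.mul_le_mul_left _ h1
  constructor
  · nlinarith
  · intro h
    have h6 : (N + 1) * (sb + (db + e)) = (N + 1) * s := by nlinarith
    exact ⟨Nat.eq_of_mul_eq_mul_left (by omega) h6, by nlinarith⟩

theorem hom_step (k N : ℕ) (ih1 : HOM k (N + 1)) (ih2 : HOM (k + 1) N) : HOM (k + 1) (N + 1) := by
  intro K L _ _ _ _ i ξ hξ S D _ hS hD
  have hl := lin_ne_zero ξ (LI_ne i ξ hξ 0)
  have hξ1 : ξ 1 ≠ 0 := LI_ne i ξ hξ 1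
  obtain ⟨hfd, hle, heq⟩ := fd_D i (lin ξ) hl S D hD
  have hfdS := ext_fd i S
  obtain ⟨M, _, _, j₁, j₂, hj, hj1, hj2⟩ := exists_double i
  have hfdD := ext_fd j₂ D
  -- elimination over `L` and over `M`
  let φ : MvPolynomial (Fin (k + 1)) L →ₗ[L] MvPolynomial (Fin k) L := (elim (solve ξ)).toLinearMap
  let ψ : MvPolynomial (Fin (k + 1)) M →ₗ[M] MvPolynomial (Fin k) M :=
    (elim (fun t => j₁ (solve ξ t))).toLinearMap
  have hsolve : (fun t => j₁ (solve ξ t)) = solve (fun t => j₁ (ξ t)) := by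
    funext t
    refine Fin.cases ?_ (fun t => ?_) t <;> simp [solve]
  have elin : ∀ {F : Type} [Field F] (η : Fin (k + 2) → F), η 1 ≠ 0 → elim (solve η) (lin η) = 0 := by
    intro F _ η h
    rw [elim_lin]
    have : ∀ x, η 1 * ((η 1)⁻¹ * x) = x := fun x => by rw [← mul_assoc, mul_inv_cancel₀ h, one_mul]
    have : (fun t => η 1 * solve η t + Fin.cons (α := fun _ => F) (η 0) (fun t => η t.succ.succ) t) = fun _ => 0 := by
      funext t
      refine Fin.cases ?_ (fun t => ?_) t <;> simp [solve, this]
    rw [this]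
    simp [lin]
  -- first inequality
  have r1 := rank_nullity φ (extS i S)
  have r2 : finrank L D ≤ finrank L ↥(extS i S ⊓ LinearMap.ker φ) := by
    rw [← heq]
    apply Submodule.finrank_mono
    refine le_inf hle ?_
    rintro _ ⟨q, hq, rfl⟩
    change elim (solve ξ) (lin ξ * q) = 0
    rw [map_mul, elin ξ hξ1, zero_mul]
  have h1 : finrank L ((extS i S).map φ) + finrank L D ≤ finrank K S := by
    rw [← ext_finrank i S]; omega
  -- the second
  have h2 := rank_nullity ψ (extS j₂ D)
  rw [ext_finrank] at h2
  let η : Fin (k + 2) → M := fun t => j₂ (ξ t)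
  have H1 := ih1 L M j₁ (fun t => η 1 * j₁ (solve ξ t) +
      Fin.cons (α := fun _ => M) (η 0) (fun t => η t.succ.succ) t)
    (LI_reduced j₁ (solve ξ) η (hj1 _ ξ hξ)) ((extS i S).map φ) ((extS j₂ D).map ψ)
    (by
      rintro _ ⟨f, hf, rfl⟩
      exact (elim_deg _ f).trans (ext_deg i S _ hS f hf))
    (by
      rintro _ ⟨q, hq, rfl⟩
      rw [← elim_lin]
      change elim _ _ * elim _ _ ∈ _
      rw [← map_mul]
      have key : ∀ f ∈ extS i S, ψ (MvPolynomial.map j₂ f) ∈ extS j₁ ((extS i S).map φ) := by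
        intro f hf
        refine Submodule.span_induction (p := fun f _ => ψ (MvPolynomial.map j₂ f) ∈ extS j₁ ((extS i S).map φ)) ?_ ?_ ?_ ?_ hf
        · rintro _ ⟨g, hg, rfl⟩
          rw [MvPolynomial.map_map, ← hj, ← MvPolynomial.map_map]
          change elim _ _ ∈ _
          rw [← elim_map]
          refine Submodule.subset_span ⟨_, ⟨_, Submodule.subset_span ⟨g, hg, rfl⟩, rfl⟩, rfl⟩
        · simp
        · intro x y _ _ hx hy
          rw [map_add, map_add]; exact add_mem hx hy
        · intro c x _ hx
          rw [MvPolynomial.smul_eq_C_mul, map_mul, MvPolynomial.map_C, ← MvPolynomial.smul_eq_C_mul, map_smul]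
          exact Submodule.smul_mem _ _ hx
      refine Submodule.span_induction (p := fun q _ => ψ (lin η * q) ∈ extS j₁ ((extS i S).map φ)) ?_ ?_ ?_ ?_ hq
      · rintro _ ⟨g, hg, rfl⟩
        rw [← lin_map, ← map_mul]
        exact key _ (hD g hg)
      · simp
      · intro x y _ _ hx hy
        rw [mul_add, map_add]; exact add_mem hx hy
      · intro c x _ hx
        rw [mul_smul_comm, map_smul]
        exact Submodule.smul_mem _ _ hx)
  -- the third
  let η' : Fin (k + 2) → M := fun t => j₁ (ξ t)
  have hη1 : η' 1 ≠ 0 := by simpa [η'] using hξ1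
  have hη0 : lin η' ≠ 0 := lin_ne_zero _ (LI_ne _ _ (hj2 _ ξ hξ) 0)
  let D' : Submodule M (MvPolynomial (Fin (k + 1)) M) := (extS j₂ D).comap (LinearMap.mulLeft M (lin η'))
  have hD' : ∀ q ∈ D', lin η' * q ∈ extS j₂ D := fun q hq => hq
  have H2 := ih2 L M j₂ η' (hj2 _ ξ hξ) D D'
    (by
      intro f hf
      by_cases hf0 : f = 0
      · simp [hf0]
      have h1 := ext_deg i S _ hS _ (hD f hf)
      rw [MvPolynomial.totalDegree_mul_of_isDomain hl hf0, lin_deg_one ξ 0 (LI_ne i ξ hξ _)] at h1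
      omega) hD'
  obtain ⟨hfd', hle', heq'⟩ := fd_D j₂ (lin η') hη0 D D' hD'
  have h3 : finrank M ↥(extS j₂ D ⊓ LinearMap.ker ψ) ≤ finrank M D' := by
    rw [← heq']
    apply Submodule.finrank_mono
    rintro p ⟨hp, hp0⟩
    have hp1 : elim (solve η') p = 0 := by
      rw [← hsolve]; exact hp0
    obtain ⟨q, hq⟩ := elim_ker _ _ hp1
    have hq' : p = lin η' * (MvPolynomial.C (η' 1)⁻¹ * q) := by
      rw [lin_solve η' hη1, hq]
      have : MvPolynomial.C (σ := Fin (k+1)) (η' 1) * MvPolynomial.C ((η' 1)⁻¹) = 1 := by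
        rw [← MvPolynomial.C_mul, mul_inv_cancel₀ hη1, MvPolynomial.C_1]
      linear_combination (-(MvPolynomial.X 0 - MvPolynomial.rename Fin.succ (lin (solve η'))) * q) * this
    refine ⟨MvPolynomial.C (η' 1)⁻¹ * q, ?_, hq'.symm⟩
    change lin η' * _ ∈ extS j₂ D
    rw [← hq']; exact hp
  have h4 : (N + (k + 1)) * finrank M ↥(extS j₂ D ⊓ LinearMap.ker ψ) ≤ N * finrank L D :=
    (Nat.mul_le_mul_left _ h3).trans H2.1
  obtain ⟨A1, A2⟩ := hom_arith k N _ _ _ _ _ h1 h2 H1.1 h4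
  refine ⟨A1, fun _ he => ?_⟩
  obtain ⟨e1, e2⟩ := A2 he
  have c1 := Nat.add_one_mul_choose_eq (N + 1 + k) k
  rcases H1.2 (by omega) e2 with h | h
  · left
    rw [h] at e1
    rw [← e1] at he ⊢
    have : (k + 1) * finrank L D = 0 := by nlinarith
    have : finrank L D = 0 := by simpa using this
    omega
  · right
    rw [h] at e1
    have : (k + 1) * finrank K S = (k + 1) * (N + 1 + (k + 1)).choose (k + 1) := by
      rw [← Nat.add_assoc (N + 1)]
      rw [← e1] at he ⊢
      nlinarith
    exact Nat.eq_of_mul_eq_mul_left (by omega) this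

theorem hom_all (n N : ℕ) : HOM n N := by
  induction n generalizing N with
  | zero => exact hom_zero N
  | succ k ihk =>
    induction N with
    | zero => exact hom_degree_zero k
    | succ N ihN => exact hom_step k N (ihk _) ihN

end PartC


/-- multi-indices of weight `N` -/
def Th (n N : ℕ) : Finset (Fin (n + 1) → ℕ) := Finset.piAntidiag Finset.univ N

theorem mem_Th {n N : ℕ} {κ : Fin (n + 1) → ℕ} : κ ∈ Th n N ↔ wt κ = N := by
  simp [Th, wt]

/-- the exponent after dehomogenization -/
def mono {n : ℕ} (κ : Fin (n + 1) → ℕ) : Fin n →₀ ℕ := Finsupp.equivFunOnFinite.symm (Fin.tail κ)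

/-- the polynomial of a family -/
def pol {F : Type} [Field F] (n N : ℕ) : ((Fin (n + 1) → ℕ) → F) →ₗ[F] MvPolynomial (Fin n) F where
  toFun h := ∑ κ ∈ Th n N, MvPolynomial.monomial (mono κ) (h κ)
  map_add' x y := by simp [Finset.sum_add_distrib]
  map_smul' c x := by simp [Finset.smul_sum, MvPolynomial.smul_monomial]

theorem mono_inj {n N : ℕ} {κ μ : Fin (n + 1) → ℕ} (hκ : κ ∈ Th n N) (hμ : μ ∈ Th n N)
    (h : mono κ = mono μ) : κ = μ := by
  rw [mem_Th, wt, Fin.sum_univ_succ] at hκ hμ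
  have h1 : Fin.tail κ = Fin.tail μ := Finsupp.equivFunOnFinite.symm.injective h
  have h2 : ∀ j : Fin n, κ j.succ = μ j.succ := fun j => congrFun h1 j
  simp only [h2] at hκ
  funext j
  refine Fin.cases ?_ (fun j => h2 j) j
  omega

theorem pol_coeff {F : Type} [Field F] {n N : ℕ} (h : (Fin (n + 1) → ℕ) → F) (κ : Fin (n + 1) → ℕ)
    (hκ : κ ∈ Th n N) : (pol n N h).coeff (mono κ) = h κ := by
  classical
  change MvPolynomial.coeff _ (∑ κ ∈ Th n N, MvPolynomial.monomial (mono κ) (h κ)) = _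
  rw [MvPolynomial.coeff_sum, Finset.sum_eq_single κ]
  · simp
  · intro μ hμ hne
    rw [MvPolynomial.coeff_monomial, if_neg]
    exact fun e => hne (mono_inj hμ hκ e)
  · exact fun h => absurd hκ h

theorem pol_map {F G : Type} [Field F] [Field G] (j : F →+* G) {n N : ℕ} (h : (Fin (n + 1) → ℕ) → F) :
    MvPolynomial.map j (pol n N h) = pol n N (fun κ => j (h κ)) := by
  change MvPolynomial.map j (∑ κ ∈ Th n N, MvPolynomial.monomial (mono κ) (h κ)) =
    ∑ κ ∈ Th n N, MvPolynomial.monomial (mono κ) (j (h κ))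
  simp

theorem pol_deg {F : Type} [Field F] {n N : ℕ} (h : (Fin (n + 1) → ℕ) → F) :
    (pol n N h).totalDegree ≤ N := by
  refine MvPolynomial.totalDegree_finsetSum_le fun κ hκ => ?_
  refine (MvPolynomial.totalDegree_monomial_le _ _).trans ?_
  rw [mem_Th, wt, Fin.sum_univ_succ] at hκ
  rw [Finsupp.sum_fintype _ _ (by simp)]
  have : ∑ j, id (mono κ j) = ∑ j : Fin n, κ j.succ := rfl
  omega

theorem lin_mono {F : Type} [Field F] {n : ℕ} (ξ : Fin (n + 1) → F) :
    lin ξ = ∑ j : Fin (n + 1), MvPolynomial.monomial (mono (Pi.single j 1)) (ξ j) := by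
  classical
  rw [Fin.sum_univ_succ, lin]
  congr 1
  · have : mono (Pi.single (0 : Fin (n + 1)) 1) = 0 := by
      ext j; simp [mono, Fin.tail]
    rw [this]; rfl
  · refine Finset.sum_congr rfl fun j _ => ?_
    have : mono (Pi.single (j.succ : Fin (n + 1)) 1) = Finsupp.single j 1 := by
      ext k
      simp [mono, Fin.tail, Finsupp.single_apply, Pi.single_apply, eq_comm]
    rw [this, MvPolynomial.C_mul_X_eq_monomial]

theorem mono_add {n : ℕ} (κ μ : Fin (n + 1) → ℕ) : mono (κ + μ) = mono κ + mono μ := by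
  ext j; simp [mono, Fin.tail]

theorem wt_add {m : ℕ} (κ μ : Fin m → ℕ) : wt (κ + μ) = wt κ + wt μ := by
  simp [wt, Finset.sum_add_distrib]

theorem wt_single {m : ℕ} (j : Fin m) : wt (Pi.single j 1 : Fin m → ℕ) = 1 := by
  simp [wt]

theorem sub1_add {m : ℕ} (κ : Fin m → ℕ) (j : Fin m) (h : κ j ≠ 0) :
    Pi.single j 1 + sub1 κ j = κ := by
  funext k
  by_cases hk : k = j
  · subst hk; simp [sub1]; omega
  · simp [sub1, hk]

theorem add_sub1 {m : ℕ} (κ : Fin m → ℕ) (j : Fin m) :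
    sub1 (Pi.single j 1 + κ) j = κ := by
  funext k
  by_cases hk : k = j
  · subst hk; simp [sub1]
  · simp [sub1, hk]

theorem wt_sub1 {m : ℕ} (κ : Fin m → ℕ) (j : Fin m) (h : κ j ≠ 0) : 1 + wt (sub1 κ j) = wt κ := by
  conv_rhs => rw [← sub1_add κ j h, wt_add, wt_single]

theorem lin_mul_pol {F : Type} [Field F] {n N : ℕ} (ξ : Fin (n + 1) → F) (h : (Fin (n + 1) → ℕ) → F) :
    lin ξ * pol n N h =
      pol n (N + 1) (fun κ => ∑ j, if κ j = 0 then 0 else ξ j * h (sub1 κ j)) := by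
  change lin ξ * (∑ κ ∈ Th n N, MvPolynomial.monomial (mono κ) (h κ)) =
    ∑ κ ∈ Th n (N + 1), MvPolynomial.monomial (mono κ) _
  rw [lin_mono, Finset.sum_mul]
  simp only [map_sum]
  rw [Finset.sum_comm]
  refine Finset.sum_congr rfl fun j _ => ?_
  rw [Finset.mul_sum]
  have : ∀ κ : Fin (n + 1) → ℕ, MvPolynomial.monomial (R := F) (mono κ) (if κ j = 0 then 0 else ξ j * h (sub1 κ j))
      = if ¬ κ j = 0 then MvPolynomial.monomial (mono κ) (ξ j * h (sub1 κ j)) else 0 := by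
    intro κ; split_ifs <;> simp_all
  simp only [this]
  rw [← Finset.sum_filter]
  refine Finset.sum_bij' (fun κ _ => Pi.single j 1 + κ) (fun κ _ => sub1 κ j) ?_ ?_ ?_ ?_ ?_
  · intro κ hκ
    rw [mem_Th] at hκ
    rw [Finset.mem_filter, mem_Th, wt_add, wt_single, hκ]
    refine ⟨by omega, by simp⟩
  · intro κ hκ
    rw [Finset.mem_filter, mem_Th] at hκ
    rw [mem_Th]
    have := wt_sub1 κ j hκ.2
    omega
  · intro κ _; exact add_sub1 κ j
  · intro κ hκ; exact sub1_add κ j (Finset.mem_filter.1 hκ).2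
  · intro κ _
    rw [add_sub1, mono_add, MvPolynomial.monomial_mul]

theorem card_Th (n N : ℕ) : (Th n N).card = (N + n).choose n := by
  classical
  have h := Finset.card_finsuppAntidiag_nat_eq_choose (s := (Finset.univ : Finset (Fin (n + 1)))) N
  rw [Finset.finsuppAntidiag, Finset.card_map, Finset.card_attach] at h
  rw [Th, h, Finset.card_univ, Fintype.card_fin]
  have : n + 1 + N - 1 = N + n := by omega
  rw [this, Nat.choose_symm_add]

theorem sub_family {K U : Type} [Field K] [AddCommGroup U] [Module K U] [FiniteDimensional K U]
    (Z : Submodule K U) : ∃ (τ : Fin (Module.finrank K Z) → U), LinearIndependent K τ ∧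
      ∀ t, τ t ∈ Z := by
  let b := Module.finBasis K Z
  exact ⟨fun t => (b t).1, b.linearIndependent.map' Z.subtype (by simp), fun t => (b t).2⟩

theorem dual_family {K V : Type} [Field K] [AddCommGroup V] [Module K V] [FiniteDimensional K V]
    (W : Submodule K V) : ∃ (y : ℕ) (τ : Fin y → (V →ₗ[K] K)), LinearIndependent K τ ∧
      Module.finrank K W + y = Module.finrank K V ∧ ∀ t, ∀ w ∈ W, τ t w = 0 := by
  obtain ⟨τ, h1, h2⟩ := sub_family (U := V →ₗ[K] K) W.dualAnnihilator
  refine ⟨_, τ, h1, Subspace.finrank_add_finrank_dualAnnihilator_eq W, ?_⟩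
  intro t w hw
  exact (Submodule.mem_dualAnnihilator _).1 (h2 t) w hw

theorem annih {K L I : Type} [Field K] [Field L] (i : K →+* L) (T : Finset I)
    (s : Set (I → L)) (R : Submodule L (I → L)) (hs : ∀ v ∈ s, ∀ κ, v κ ∈ Set.range i)
    (hR : Submodule.span L s = R) (hT : ∀ v ∈ R, ∀ κ, κ ∉ T → v κ = 0) :
    ∃ (y : ℕ) (h : Fin y → I → K), LinearIndependent K h ∧ (∀ t κ, κ ∉ T → h t κ = 0) ∧
      T.card ≤ y + Module.finrank L R ∧
      ∀ t, ∀ v ∈ R, ∑ κ ∈ T, i (h t κ) * v κ = 0 := by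
  classical
  let res : R →ₗ[L] (T → L) := (LinearMap.funLeft L L (Subtype.val : T → I)).comp R.subtype
  have hres : Function.Injective res := by
    intro x y hxy
    apply Subtype.ext
    funext κ
    by_cases hκ : κ ∈ T
    · exact congrFun hxy ⟨κ, hκ⟩
    · rw [hT _ x.2 _ hκ, hT _ y.2 _ hκ]
  have hfd : FiniteDimensional L R := FiniteDimensional.of_injective res hres
  let W : Submodule K (T → K) := Submodule.span K {w | ∃ v ∈ s, ∀ κ : T, i (w κ) = v κ}
  have hW : ∀ w ∈ W, ∃ v : R, ∀ κ : T, i (w κ) = v.1 κ := by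
    intro w hw
    refine Submodule.span_induction (p := fun w _ => ∃ v : R, ∀ κ : T, i (w κ) = v.1 κ) ?_ ?_ ?_ ?_ hw
    · rintro w ⟨v, hv, h⟩
      exact ⟨⟨v, hR ▸ Submodule.subset_span hv⟩, h⟩
    · exact ⟨0, by simp⟩
    · rintro x y _ _ ⟨v, hv⟩ ⟨u, hu⟩
      exact ⟨v + u, fun κ => by simp [hv, hu]⟩
    · rintro c x _ ⟨v, hv⟩
      exact ⟨i c • v, fun κ => by simp [hv]⟩
  have hWr : Module.finrank K W ≤ Module.finrank L R := by
    let b := Module.finBasis K W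
    choose v hv using fun t => hW (b t) (b t).2
    have h1 : LinearIndependent K (fun t => (b t : T → K)) :=
      b.linearIndependent.map' W.subtype (by simp)
    have h2 := base_change_li i _ h1
    have h3 : LinearIndependent L v := by
      apply LinearIndependent.of_comp res
      convert h2 using 1
      funext t κ
      exact (hv t κ).symm
    simpa using h3.fintype_card_le_finrank
  obtain ⟨y, τ, hτ, hdim, hτ0⟩ := dual_family W
  rw [Module.finrank_fintype_fun_eq_card, Fintype.card_coe] at hdim
  refine ⟨y,
    fun t κ => if hκ : κ ∈ T then τ t (Pi.single ⟨κ, hκ⟩ 1) else 0, ?_, ?_, ?_, ?_⟩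
  · rw [Fintype.linearIndependent_iff]
    intro c hc
    refine Fintype.linearIndependent_iff.1 hτ c ?_
    refine LinearMap.pi_ext' fun κ => LinearMap.ext_ring ?_
    have := congrFun hc κ.1
    simpa using this
  · intro t κ hκ
    simp [hκ]
  · omega
  · intro t v hv
    subst hR
    refine Submodule.span_induction (p := fun v _ => ∑ κ ∈ T, i (if hκ : κ ∈ T then τ t (Pi.single ⟨κ, hκ⟩ 1) else 0) * v κ = 0) ?_ ?_ ?_ ?_ hv
    · intro v hv
      choose w hw using hs v hv
      have hwW : (fun κ : T => w κ) ∈ W := Submodule.subset_span ⟨v, hv, fun κ => hw κ⟩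
      have h0 : τ t (fun κ : T => w κ) = 0 := hτ0 t _ hwW
      rw [← Finset.sum_coe_sort, ← map_zero i, ← h0, LinearMap.pi_apply_eq_sum_univ, map_sum]
      refine Finset.sum_congr rfl fun κ _ => ?_
      have : (fun j => if κ = j then (1 : K) else 0) = Pi.single κ 1 := by
        funext j; simp [Pi.single_apply, eq_comm]
      rw [this, smul_eq_mul, map_mul, hw, mul_comm]
      simp
    · simp
    · intro x y _ _ hx hy
      simp only [Pi.add_apply, mul_add, Finset.sum_add_distrib, hx, hy, add_zero]
    · intro c x _ hx
      simp only [Pi.smul_apply, smul_eq_mul, mul_left_comm _ c, ← Finset.mul_sum, hx, mul_zero]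


/-- the polynomial `P_h + ξ Q_h` -/
def gpol {F : Type} [Field F] (n N : ℕ) (ξ : Fin (n + 1) → F) :
    ((Fin (n + 1) → ℕ) → F) →ₗ[F] MvPolynomial (Fin n) F :=
  pol n (N + 1) + (LinearMap.mulLeft F (lin ξ)).comp (pol n N)

theorem gpol_apply {F : Type} [Field F] (n N : ℕ) (ξ : Fin (n + 1) → F) (h) :
    gpol n N ξ h = pol n (N + 1) h + lin ξ * pol n N h := rfl

theorem key_span {L M I P : Type} [Field L] [Field M] [AddCommGroup P] [Module M P] (j : L →+* M)
    (B : Set (I → L)) (S : Submodule M P) (G : (I → M) →ₗ[M] P)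
    (hB : ∀ b ∈ B, G (fun κ => j (b κ)) ∈ S) (v : I → L) (hv : v ∈ Submodule.span L B) :
    G (fun κ => j (v κ)) ∈ S := by
  induction hv using Submodule.span_induction with
  | mem x hx => exact hB x hx
  | zero =>
    have : (fun κ : I => j ((0 : I → L) κ)) = 0 := by
      funext κ; simp
    rw [this, map_zero]; exact zero_mem _
  | add x y _ _ hx hy =>
    have : (fun κ => j ((x + y) κ)) = (fun κ => j (x κ)) + (fun κ => j (y κ)) := by
      funext κ; simp
    rw [this, map_add]; exact add_mem hx hy
  | smul c x _ hx =>
    have : (fun κ => j ((c • x) κ)) = j c • (fun κ => j (x κ)) := by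
      funext κ; simp
    rw [this, map_smul]; exact Submodule.smul_mem _ _ hx

theorem core {K L : Type} [Field K] [Field L] [IsAlgClosed K] [IsAlgClosed L] (i : K →+* L)
    (n N : ℕ) (ξ : Fin (n + 1) → L)
    (hξ : LI i (Fin.cons 1 ξ : Fin (n + 2) → L)) (y : ℕ) (h : Fin y → (Fin (n + 1) → ℕ) → K)
    (hli : LinearIndependent K h) (hsupp : ∀ t κ, κ ∉ Th n (N + 1) ∪ Th n N → h t κ = 0) :
    ∃ d e, d + e = y ∧
      e = Module.finrank L ((Submodule.span L (Set.range fun t κ => i (h t κ))).map (gpol n N ξ)) ∧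
      (N + 1 + n) * d ≤ (N + 1) * e ∧
      ((N + 1 + n) * d = (N + 1) * e → e = 0 ∨ e = (N + 1 + n).choose n) := by
  classical
  set A : Submodule L ((Fin (n + 1) → ℕ) → L) := Submodule.span L (Set.range fun t κ => i (h t κ)) with hA
  have hfd : FiniteDimensional L A := FiniteDimensional.span_of_finite L (Set.finite_range _)
  have hy : Module.finrank L A = y := by
    rw [hA, finrank_span_eq_card (base_change_li i h hli), Fintype.card_fin]
  have hAs : ∀ v ∈ A, ∀ κ, κ ∉ Th n (N + 1) ∪ Th n N → v κ = 0 := by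
    intro v hv κ hκ
    refine Submodule.span_induction (p := fun v _ => v κ = 0) ?_ ?_ ?_ ?_ hv
    · rintro _ ⟨t, rfl⟩
      simp [hsupp t κ hκ]
    · rfl
    · intro x y _ _ hx hy
      simp [hx, hy]
    · intro c x _ hx
      simp [hx]
  have hrn := rank_nullity (gpol n N ξ) A
  rw [hy] at hrn
  set S := A.map (gpol n N ξ) with hS
  set Ker := A ⊓ LinearMap.ker (gpol n N ξ) with hKer
  have hfdK : FiniteDimensional L Ker := Submodule.finiteDimensional_of_le inf_le_left
  have hfdD : FiniteDimensional L (Ker.map (pol n N)) := inferInstance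
  have hd : Module.finrank L (Ker.map (pol n N)) = Module.finrank L Ker := by
    have := rank_nullity (pol n N) Ker
    have h0 : Ker ⊓ LinearMap.ker (pol (F := L) n N) = ⊥ := by
      rw [eq_bot_iff]
      rintro v ⟨⟨hv, hv1⟩, hv2⟩
      have hv2 : pol n N v = 0 := hv2
      have hv1 : gpol n N ξ v = 0 := hv1
      rw [gpol_apply, hv2, mul_zero, add_zero] at hv1
      rw [Submodule.mem_bot]
      funext κ
      by_cases h1 : κ ∈ Th n (N + 1)
      · rw [← pol_coeff v κ h1, hv1]; simp
      by_cases h2 : κ ∈ Th n N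
      · rw [← pol_coeff v κ h2, hv2]; simp
      exact hAs v hv κ (by simp [h1, h2])
    rw [h0, finrank_bot] at this
    omega
  obtain ⟨M, _, _, j₁, j₂, hj, hj1, hj2⟩ := exists_double i
  have hli2 : LI j₁ (fun t => j₁ (ξ t) - j₂ (ξ t)) := by
    intro c hc t
    have := hj1 _ _ hξ (Fin.cons (∑ t, c t * ξ t) (fun t => - c t)) (by
      rw [← hc, Fin.sum_univ_succ]
      simp only [Fin.cons_zero, Fin.cons_succ, map_one, mul_one, map_sum, map_mul, map_neg, mul_sub,
        Finset.sum_sub_distrib, neg_mul, Finset.sum_neg_distrib]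
      ring) t.succ
    simpa using this
  have hmapg : ∀ v, MvPolynomial.map j₁ (gpol n N ξ v) = gpol n N (fun t => j₁ (ξ t)) (fun κ => j₁ (v κ)) := by
    intro v
    rw [gpol_apply, gpol_apply, map_add, map_mul, pol_map, pol_map, lin_map]
  have H := hom_all n (N + 1) L M j₁ _ hli2 S (extS j₂ (Ker.map (pol n N)))
    (by
      rintro _ ⟨v, _, rfl⟩
      rw [gpol_apply]
      refine (MvPolynomial.totalDegree_add _ _).trans (max_le (pol_deg _) ?_)
      refine (MvPolynomial.totalDegree_mul _ _).trans ?_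
      have h1 := lin_deg ξ
      have h2 := pol_deg (n := n) (N := N) v
      omega)
    (by
      intro q hq
      have key : ∀ v ∈ A, gpol n N (fun t => j₁ (ξ t)) (fun κ => j₂ (v κ)) ∈ extS j₁ S := by
        intro v hv
        refine key_span j₂ _ _ _ ?_ v hv
        rintro _ ⟨t, rfl⟩
        have : (fun κ => j₂ (i (h t κ))) = (fun κ => j₁ (i (h t κ))) := by
          funext κ
          exact (congrArg (fun f : K →+* M => f (h t κ)) hj).symm
        rw [this, ← hmapg (fun κ => i (h t κ))]
        have hm : (fun κ => i (h t κ)) ∈ A := Submodule.subset_span (Set.mem_range_self t)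
        exact Submodule.subset_span (Set.mem_image_of_mem _ (Submodule.mem_map_of_mem hm))
      refine Submodule.span_induction (p := fun q _ => lin (fun t => j₁ (ξ t) - j₂ (ξ t)) * q ∈ extS j₁ S) ?_ ?_ ?_ ?_ hq
      · rintro _ ⟨_, ⟨v, ⟨hv, hv1⟩, rfl⟩, rfl⟩
        have hv1 : gpol n N ξ v = 0 := hv1
        have hv2 := congrArg (MvPolynomial.map j₂) hv1
        rw [gpol_apply, map_add, map_mul, pol_map, pol_map, lin_map, map_zero] at hv2
        have hlin : lin (fun t => j₁ (ξ t) - j₂ (ξ t)) = lin (fun t => j₁ (ξ t)) - lin (fun t => j₂ (ξ t)) := by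
          simp only [lin, map_sub, sub_mul, Finset.sum_sub_distrib]
          ring
        have := key v hv
        rw [gpol_apply] at this
        rw [pol_map, hlin]
        convert this using 1
        linear_combination -hv2
      · simp
      · intro x y _ _ hx hy
        rw [mul_add]; exact add_mem hx hy
      · intro c x _ hx
        rw [mul_smul_comm]; exact Submodule.smul_mem _ _ hx)
  rw [ext_finrank, hd] at H
  exact ⟨Module.finrank L Ker, Module.finrank L S, by omega, rfl, H.1, fun he => H.2 (by omega) he⟩


theorem orth {K ι : Type} [Field K] [Fintype ι] (S C : Submodule K (ι → K))
    (h : ∀ s ∈ S, ∀ c ∈ C, ∑ κ, c κ * s κ = 0) :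
    Module.finrank K C + Module.finrank K S ≤ Fintype.card ι := by
  classical
  have h1 := Subspace.finrank_add_finrank_dualAnnihilator_eq S
  rw [Module.finrank_fintype_fun_eq_card] at h1
  have h2 : C.map (dotProductEquiv K ι).toLinearMap ≤ S.dualAnnihilator := by
    rintro _ ⟨c, hc, rfl⟩
    rw [Submodule.mem_dualAnnihilator]
    intro s hs
    exact h s hs c hc
  have h3 := Submodule.finrank_mono h2
  have h4 := LinearEquiv.finrank_map_eq (dotProductEquiv K ι) C
  have h5 : Module.finrank K (C.map (dotProductEquiv K ι).toLinearMap) = Module.finrank K C := h4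
  omega

theorem Evec_self {m : ℕ} (κ : Fin m → ℕ) : Evec κ κ = 1 := by simp [Evec]

theorem Evec_ne {m : ℕ} (κ μ : Fin m → ℕ) (h : μ ≠ κ) : Evec κ μ = 0 := by simp [Evec, h]

theorem inOmega_iff (n N : ℕ) (κ : Fin (n + 1) → ℕ) :
    inOmega (n + 1) (N + 1) κ ↔ κ ∈ Th n (N + 1) ∪ Th n N := by
  rw [Finset.mem_union, mem_Th, mem_Th, inOmega]
  omega

theorem omega_supp (n N : ℕ) (v) (hv : v ∈ OmegaSpace (n + 1) (N + 1)) (κ)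
    (hκ : κ ∉ Th n (N + 1) ∪ Th n N) : v κ = 0 := by
  induction hv using Submodule.span_induction with
  | mem x hx =>
    obtain ⟨μ, hμ, rfl⟩ := hx
    apply Evec_ne
    rintro rfl
    exact hκ ((inOmega_iff n N _).1 hμ)
  | zero => rfl
  | add x y _ _ hx hy => simp [hx, hy]
  | smul c x _ hx => simp [hx]

theorem span_card {I : Type} [DecidableEq I] (T : Finset I) (Z : I → I → ℂ) (hZ : ∀ κ ∈ T, ∀ μ ∈ T, Z κ μ = if μ = κ then 1 else 0)
    (V : Submodule ℂ (I → ℂ)) (P : I → Prop) (hP : ∀ κ, P κ ↔ κ ∈ T)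
    (hV : V = Submodule.span ℂ {v | ∃ κ, P κ ∧ v = Z κ}) :
    FiniteDimensional ℂ V ∧ Module.finrank ℂ V = T.card := by
  have h1 : V = Submodule.span ℂ (Set.range (fun κ : T => Z κ)) := by
    rw [hV]
    congr 1
    ext v
    constructor
    · rintro ⟨κ, hκ, rfl⟩
      exact ⟨⟨κ, (hP κ).1 hκ⟩, rfl⟩
    · rintro ⟨κ, rfl⟩
      exact ⟨κ, (hP κ).2 κ.2, rfl⟩
  have hli : LinearIndependent ℂ (fun κ : T => Z κ) := by
    rw [Fintype.linearIndependent_iff]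
    intro c hc μ
    have := congrFun hc μ.1
    simp only [Finset.sum_apply, Pi.smul_apply, smul_eq_mul, Pi.zero_apply] at this
    rw [Finset.sum_eq_single μ] at this
    · rw [hZ _ μ.2 _ μ.2, if_pos rfl, mul_one] at this
      exact this
    · intro κ _ hne
      rw [hZ _ κ.2 _ μ.2, if_neg (fun e => hne (Subtype.ext e.symm)), mul_zero]
    · simp
  subst h1
  refine ⟨FiniteDimensional.span_of_finite ℂ (Set.finite_range _), ?_⟩
  rw [finrank_span_eq_card hli, Fintype.card_coe]

theorem omega_card (n N : ℕ) : FiniteDimensional ℂ (OmegaSpace (n + 1) (N + 1)) ∧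
    Module.finrank ℂ (OmegaSpace (n + 1) (N + 1)) = (Th n (N + 1) ∪ Th n N).card := by
  classical
  refine span_card _ Evec ?_ _ _ (inOmega_iff n N) rfl
  intro κ _ μ _
  simp [Evec]

theorem Zvec_apply {m : ℕ} (ξ : Fin m → ℂ) (κ μ : Fin m → ℕ) :
    Zvec ξ κ μ = Evec κ μ + ∑ j, if κ j = 0 then 0 else ξ j * Evec (sub1 κ j) μ := by
  simp only [Zvec, Pi.add_apply, Finset.sum_apply]
  congr 1
  refine Finset.sum_congr rfl fun j _ => ?_
  split_ifs <;> simp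

theorem F_card (n N : ℕ) (ξ : Fin (n + 1) → ℂ) :
    FiniteDimensional ℂ (Fspace (n + 1) (N + 1) ξ) ∧
    Module.finrank ℂ (Fspace (n + 1) (N + 1) ξ) = (Th n (N + 1)).card := by
  classical
  refine span_card _ (Zvec ξ) ?_ _ _ (fun κ => mem_Th.symm) rfl
  intro κ hκ μ hμ
  rw [mem_Th] at hκ hμ
  rw [Zvec_apply, Finset.sum_eq_zero, add_zero]
  · simp [Evec]
  · intro j _
    split_ifs with h
    · rfl
    · rw [Evec_ne, mul_zero]
      rintro rfl
      have := wt_sub1 κ j h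
      omega

theorem F_le (n N : ℕ) (ξ : Fin (n + 1) → ℂ) :
    Fspace (n + 1) (N + 1) ξ ≤ OmegaSpace (n + 1) (N + 1) := by
  refine Submodule.span_le.2 ?_
  rintro _ ⟨κ, hκ, rfl⟩
  refine add_mem (Submodule.subset_span ⟨κ, ?_, rfl⟩) (Submodule.sum_mem _ fun j _ => ?_)
  · rw [inOmega]; omega
  · split_ifs with h
    · exact zero_mem _
    · refine Submodule.smul_mem _ _ (Submodule.subset_span ⟨_, ?_, rfl⟩)
      have := wt_sub1 κ j h
      rw [inOmega]; omega

/-- `⟨h, Z_κ⟩` -/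
def tz {n : ℕ} (ξ : Fin (n + 1) → ℂ) (T : Finset (Fin (n + 1) → ℕ)) :
    ((Fin (n + 1) → ℕ) → ℂ) →ₗ[ℂ] (T → ℂ) where
  toFun h κ := h κ + ∑ j, if κ.1 j = 0 then 0 else ξ j * h (sub1 κ j)
  map_add' x y := by
    funext κ
    simp only [Pi.add_apply]
    rw [add_add_add_comm, ← Finset.sum_add_distrib]
    congr 1
    refine Finset.sum_congr rfl fun j _ => ?_
    split_ifs <;> ring
  map_smul' c x := by
    funext κ
    simp only [Pi.smul_apply, smul_eq_mul, RingHom.id_apply, mul_add, Finset.mul_sum]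
    congr 1
    refine Finset.sum_congr rfl fun j _ => ?_
    split_ifs <;> ring

theorem pair_E {m : ℕ} (T : Finset (Fin m → ℕ)) (h : (Fin m → ℕ) → ℂ) (hT : ∀ κ, κ ∉ T → h κ = 0)
    (κ : Fin m → ℕ) : ∑ μ ∈ T, h μ * Evec κ μ = h κ := by
  classical
  simp only [Evec, mul_ite, mul_one, mul_zero, Finset.sum_ite_eq']
  split_ifs with hk
  · rfl
  · exact (hT κ hk).symm

theorem pair_Z {m : ℕ} (T : Finset (Fin m → ℕ)) (h : (Fin m → ℕ) → ℂ) (hT : ∀ κ, κ ∉ T → h κ = 0)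
    (ξ : Fin m → ℂ) (κ : Fin m → ℕ) : ∑ μ ∈ T, h μ * Zvec ξ κ μ =
      h κ + ∑ j, if κ j = 0 then 0 else ξ j * h (sub1 κ j) := by
  simp only [Zvec_apply, mul_add, Finset.sum_add_distrib, pair_E T h hT, Finset.mul_sum]
  congr 1
  rw [Finset.sum_comm]
  refine Finset.sum_congr rfl fun j _ => ?_
  split_ifs
  · simp
  · simp only [mul_left_comm _ (ξ j), ← Finset.mul_sum, pair_E T h hT]

theorem gpol_tz (n N : ℕ) (ξ : Fin (n + 1) → ℂ) (A : Submodule ℂ ((Fin (n + 1) → ℕ) → ℂ))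
    [FiniteDimensional ℂ A] :
    Module.finrank ℂ (A.map (gpol n N ξ)) ≤ Module.finrank ℂ (A.map (tz ξ (Th n (N + 1)))) := by
  let Pr : (Th n (N + 1) → ℂ) →ₗ[ℂ] MvPolynomial (Fin n) ℂ :=
    ∑ κ : Th n (N + 1), (MvPolynomial.monomial (mono κ.1)).comp (LinearMap.proj κ)
  have h : gpol n N ξ = Pr.comp (tz ξ (Th n (N + 1))) := by
    refine LinearMap.ext fun h => ?_
    rw [gpol_apply, lin_mul_pol, ← map_add]
    change ∑ κ ∈ Th n (N + 1), MvPolynomial.monomial (mono κ) _ = _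
    rw [← Finset.sum_coe_sort]
    simp only [Pr, LinearMap.comp_apply, LinearMap.sum_apply]
    rfl
  rw [h, Submodule.map_comp]
  exact Submodule.finrank_map_le _ _

theorem upper (n N : ℕ) (ξ : Fin (n + 1) → ℂ) (A R : Submodule ℂ ((Fin (n + 1) → ℕ) → ℂ))
    [FiniteDimensional ℂ A] (T : Finset (Fin (n + 1) → ℕ))
    (hA : ∀ h ∈ A, ∀ κ, κ ∉ T → h κ = 0) (hAR : ∀ h ∈ A, ∀ v ∈ R, ∑ κ ∈ T, h κ * v κ = 0) :
    Module.finrank ℂ ↥(Fspace (n + 1) (N + 1) ξ ⊓ R) + Module.finrank ℂ (A.map (gpol n N ξ)) ≤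
      (Th n (N + 1)).card := by
  have h1 := gpol_tz n N ξ A
  let Φ : (Th n (N + 1) → ℂ) →ₗ[ℂ] ((Fin (n + 1) → ℕ) → ℂ) :=
    Fintype.linearCombination ℂ (fun κ : Th n (N + 1) => Zvec ξ κ)
  have hΦ : ∀ c, Φ c = ∑ κ, c κ • Zvec ξ κ := fun c => Fintype.linearCombination_apply _ _ _
  have h2 := orth (A.map (tz ξ (Th n (N + 1)))) (R.comap Φ) (by
    rintro _ ⟨h, hh, rfl⟩ c hc
    have h0 := hAR h hh _ hc
    rw [hΦ] at h0
    simp only [Finset.sum_apply, Pi.smul_apply, smul_eq_mul, Finset.mul_sum] at h0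
    rw [Finset.sum_comm] at h0
    rw [← h0]
    refine Finset.sum_congr rfl fun κ _ => ?_
    simp only [mul_left_comm _ (c κ), ← Finset.mul_sum]
    rw [pair_Z T h (hA h hh)]
    rfl)
  rw [Fintype.card_coe] at h2
  have h3 : Fspace (n + 1) (N + 1) ξ ⊓ R ≤ (R.comap Φ).map Φ := by
    rintro v ⟨hv, hvR⟩
    have : Fspace (n + 1) (N + 1) ξ ≤ LinearMap.range Φ := by
      refine Submodule.span_le.2 ?_
      rintro _ ⟨κ, hκ, rfl⟩
      classical
      refine ⟨Pi.single ⟨κ, mem_Th.2 hκ⟩ 1, ?_⟩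
      exact (Fintype.linearCombination_apply_single ℂ _ _ _).trans (one_smul _ _)
    obtain ⟨c, rfl⟩ := this hv
    exact ⟨c, hvR, rfl⟩
  have h4 := (Submodule.finrank_mono h3).trans (Submodule.finrank_map_le _ _)
  omega

theorem T_card (n N : ℕ) : (Th n (N + 1) ∪ Th n N).card = (Th n (N + 1)).card + (Th n N).card := by
  apply Finset.card_union_of_disjoint
  rw [Finset.disjoint_left]
  intro κ h1 h2
  rw [mem_Th] at h1 h2
  omega

theorem Th_rel (n N : ℕ) : (N + 1) * (Th n (N + 1)).card = (N + 1 + n) * (Th n N).card := by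
  rw [card_Th, card_Th, ← Nat.choose_symm_add, ← Nat.choose_symm_add (a := N)]
  have := Nat.add_one_mul_choose_eq (N + n) N
  rw [show N + 1 + n = N + n + 1 by ring, this]
  ring

theorem main_aux (n N : ℕ) (ξ : Fin (n + 1) → ℂ) (hξ : LinIndepOverQbar (n + 1) ξ)
    (R : Submodule ℂ ((Fin (n + 1) → ℕ) → ℂ)) (hR : R ≤ OmegaSpace (n + 1) (N + 1))
    (hRalg : DefinedOverQbar R) :
    (2 * (N + 1) + n) * Module.finrank ℂ ↥(Fspace (n + 1) (N + 1) ξ ⊓ R) ≤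
      (N + 1 + n) * Module.finrank ℂ R ∧
    ((2 * (N + 1) + n) * Module.finrank ℂ ↥(Fspace (n + 1) (N + 1) ξ ⊓ R) =
      (N + 1 + n) * Module.finrank ℂ R ↔ R = ⊥ ∨ R = OmegaSpace (n + 1) (N + 1)) := by
  obtain ⟨hfO, hcO⟩ := omega_card n N
  obtain ⟨hfF, hcF⟩ := F_card n N ξ
  have hfR : FiniteDimensional ℂ R := Submodule.finiteDimensional_of_le hR
  let K := algebraicClosure ℚ ℂ
  have hK : IsAlgClosed K := (algebraicClosure.isAlgClosure ℚ ℂ).isAlgClosed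
  let i : K →+* ℂ := algebraMap K ℂ
  obtain ⟨s, hs, hsR⟩ := hRalg
  obtain ⟨y, h, hli, hsupp, hy, hann⟩ := annih i (Th n (N + 1) ∪ Th n N) s R
    (fun v hv κ => ⟨⟨v κ, mem_algebraicClosure_iff.2 (hs v hv κ)⟩, rfl⟩) hsR
    (fun v hv κ hκ => omega_supp n N v (hR hv) κ hκ)
  have hLI : LI i (Fin.cons 1 ξ : Fin (n + 2) → ℂ) := by
    intro c hc
    rw [Fin.sum_univ_succ] at hc
    simp only [Fin.cons_zero, Fin.cons_succ, mul_one] at hc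
    have := hξ (i (c 0)) (fun j => i (c j.succ)) (mem_algebraicClosure_iff.1 (c 0).2)
      (fun j => mem_algebraicClosure_iff.1 (c j.succ).2) hc
    intro t
    refine Fin.cases ?_ (fun t => ?_) t
    · exact i.injective (this.1.trans (map_zero i).symm)
    · exact i.injective ((this.2 t).trans (map_zero i).symm)
  obtain ⟨d, e, hde, he, hin, heq⟩ := core i n N ξ hLI y h hli hsupp
  have : FiniteDimensional ℂ (Submodule.span ℂ (Set.range fun t κ => i (h t κ))) :=
    FiniteDimensional.span_of_finite ℂ (Set.finite_range _)
  have hup := upper n N ξ (Submodule.span ℂ (Set.range fun t κ => i (h t κ))) R (T := Th n (N + 1) ∪ Th n N)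
    (by
      intro v hv κ hκ
      induction hv using Submodule.span_induction with
      | mem x hx =>
        obtain ⟨t, rfl⟩ := hx
        simp [hsupp t κ hκ]
      | zero => rfl
      | add x y _ _ hx hy => simp [hx, hy]
      | smul c x _ hx => simp [hx])
    (by
      intro x hx v hv
      induction hx using Submodule.span_induction with
      | mem x hx =>
        obtain ⟨t, rfl⟩ := hx
        exact hann t v hv
      | zero => simp
      | add x y _ _ hx hy => simp only [Pi.add_apply, add_mul, Finset.sum_add_distrib, hx, hy, add_zero]
      | smul c x _ hx =>
        simp only [Pi.smul_apply, smul_eq_mul, mul_assoc, ← Finset.mul_sum, hx, mul_zero])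
  rw [← he] at hup
  have hrel := Th_rel n N
  rw [T_card] at hy hcO
  rw [← card_Th] at heq
  generalize ha : Module.finrank ℂ ↥(Fspace (n + 1) (N + 1) ξ ⊓ R) = a at *
  generalize hr : Module.finrank ℂ R = r at *
  generalize (Th n (N + 1)).card = A0 at *
  generalize (Th n N).card = B0 at *
  have hk : (N + 1 + n) * (A0 + B0) ≤ (N + 1 + n) * (y + r) := Nat.mul_le_mul_left _ hy
  have hk2 : (2 * (N + 1) + n) * (a + e) ≤ (2 * (N + 1) + n) * A0 := Nat.mul_le_mul_left _ hup
  subst hde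
  refine ⟨by nlinarith, ?_, ?_⟩
  · intro hE
    have e1 : (N + 1 + n) * d = (N + 1) * e := by nlinarith
    have e2 : (N + 1 + n) * (A0 + B0) = (N + 1 + n) * (d + e + r) := by nlinarith
    have e3 : A0 + B0 = d + e + r := Nat.eq_of_mul_eq_mul_left (by omega) e2
    rcases heq e1 with h0 | h0
    · right
      subst h0
      have : d = 0 := by
        rw [mul_zero] at e1
        exact (Nat.mul_eq_zero.1 e1).resolve_left (by omega)
      apply Submodule.eq_of_le_of_finrank_le hR
      omega
    · left
      subst h0
      have : d = B0 := Nat.eq_of_mul_eq_mul_left (by omega) (e1.trans hrel)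
      apply Submodule.finrank_eq_zero.1
      omega
  · rintro (h0 | h0)
    · subst h0
      have : r = 0 := by rw [← hr]; simp
      have : a = 0 := by rw [← ha]; simp
      subst_vars; simp
    · have h1 : r = A0 + B0 := by rw [← hr, h0, hcO]
      have h2 : a = A0 := by
        rw [← ha, h0, inf_eq_left.2 (F_le n N ξ), hcF]
      subst h1 h2
      nlinarith


/-- **Theorem 5.1 (non-degeneracy).** Let `m, N ≥ 1` and let `ξ₁, …, ξ_m ∈ ℂ` be such
that `1, ξ₁, …, ξ_m` are linearly independent over `ℚ̄`. Let `R` be a subspace of `ℂ^Ω`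
defined over `ℚ̄`. Then `dim R ≥ (2 - (m-1)/(N+m-1)) · dim(F ∩ R)`, and equality holds
if and only if `R = {0}` or `R = ℂ^Ω`. -/
theorem dimension_inequality_for_algebraic_subspaces
    (m N : ℕ) (hm : 1 ≤ m) (hN : 1 ≤ N) (ξ : Fin m → ℂ)
    (hξ : LinIndepOverQbar m ξ)
    (R : Submodule ℂ ((Fin m → ℕ) → ℂ)) (hR : R ≤ OmegaSpace m N)
    (hRalg : DefinedOverQbar R) :
    (2 - ((m : ℝ) - 1) / ((N : ℝ) + (m : ℝ) - 1)) *
        (Module.finrank ℂ ↥(Fspace m N ξ ⊓ R) : ℝ) ≤ (Module.finrank ℂ ↥R : ℝ) ∧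
    ((Module.finrank ℂ ↥R : ℝ) =
        (2 - ((m : ℝ) - 1) / ((N : ℝ) + (m : ℝ) - 1)) *
          (Module.finrank ℂ ↥(Fspace m N ξ ⊓ R) : ℝ) ↔
      R = ⊥ ∨ R = OmegaSpace m N) := by
  obtain ⟨n, rfl⟩ : ∃ n, m = n + 1 := ⟨m - 1, by omega⟩
  obtain ⟨N, rfl⟩ : ∃ k, N = k + 1 := ⟨N - 1, by omega⟩
  obtain ⟨h1, h2⟩ := main_aux n N ξ hξ R hR hRalg
  rw [← h2]
  have h1' : (2 * ((N : ℝ) + 1) + n) * (Module.finrank ℂ ↥(Fspace (n + 1) (N + 1) ξ ⊓ R) : ℝ) ≤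
      ((N : ℝ) + 1 + n) * Module.finrank ℂ R := by exact_mod_cast h1
  have h2' : (2 * (N + 1) + n) * Module.finrank ℂ ↥(Fspace (n + 1) (N + 1) ξ ⊓ R) =
      (N + 1 + n) * Module.finrank ℂ R ↔
      (2 * ((N : ℝ) + 1) + n) * (Module.finrank ℂ ↥(Fspace (n + 1) (N + 1) ξ ⊓ R) : ℝ) =
      ((N : ℝ) + 1 + n) * Module.finrank ℂ R := by norm_cast
  rw [h2']
  have hp : (0 : ℝ) < (N : ℝ) + 1 + n := by positivity
  have hc : (2 - (((n + 1 : ℕ) : ℝ) - 1) / (((N + 1 : ℕ) : ℝ) + ((n + 1 : ℕ) : ℝ) - 1)) =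
      (2 * ((N : ℝ) + 1) + n) / ((N : ℝ) + 1 + n) := by
    push_cast
    have : (N : ℝ) + 1 + (n + 1) - 1 = (N : ℝ) + 1 + n := by ring
    rw [this]
    field_simp
    ring
  rw [hc, div_mul_eq_mul_div, div_le_iff₀ hp, eq_div_iff hp.ne']
  refine ⟨by linarith, ⟨fun h => by linarith, fun h => by linarith⟩⟩
end
end
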